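/- For any integer k ≥ 1 and real a > 1, the sum Σ_{n > x} Λ(n)^k n^{-a} equals (x^{1-a} (log x)^{k-1})/(a-1) · (1 + O(1/log x)) as x → ∞, where the implied constant depends only on k and a. -/

import Mathlib

open Real ArithmeticFunction Filter

/-!
Put `k = m + 1`. The coefficients `Λ(n)^(m+1) / log^m n` are at most `Λ(n)` and equal `log p` at
primes, so their partial sums lie between `θ` and `ψ`. The prime number theorem with error term
`ψ(t) = t + O(t / log t)` therefore applies to them, and partial summation against the weight
`t^(-a) log^m t`, whose tail integral is `x^(1-a) log^m x / (a - 1) · (1 + O(1 / log x))`, gives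
the asymptotics.

For the error term, `3 + 4 cos θ + cos 2θ ≥ 0` together with the bounds `ζ(s), ζ'(s) = O(|t|^δ)`
just to the left of `re s = 1` gives `ζ'/ζ(s) = O(|t|^ε)` for `1 - c |t|^(-ε) ≤ re s`. By Cauchy's
estimates, every derivative of `-((s - 1) ζ(s))' / ((s - 1) ζ(s)) / (s (s + 1))` is then
`O(|t|^(-3/2))` up to the line `re s = 1`. This function is the Mellin transform of a smoothed form
of `ψ(x) - x`, and differentiating it `n` times multiplies that error by `log^n x`; so the
smoothed error saves every power of `log x`, and the monotonicity of `ψ` removes the smoothing.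
-/

section Zeta

open MeasureTheory Asymptotics
open scoped Topology

/-- The remainder `∫_N^∞ {t} t^(-s-1) dt` left when the sum defining `ζ(s)` is compared with an
integral from `N` on; it is holomorphic for `0 < re s`. -/
noncomputable def zetaRemainder (N : ℕ) (s : ℂ) : ℂ :=
  ∫ t in Set.Ioi (N : ℝ), ((Int.fract t : ℝ) : ℂ) * (t : ℂ) ^ (-s - 1)

lemma norm_fract_mul_cpow_le {t : ℝ} (ht : 0 < t) (s : ℂ) :
    ‖((Int.fract t : ℝ) : ℂ) * (t : ℂ) ^ (-s - 1)‖ ≤ t ^ (-s.re - 1) := by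
  rw [norm_mul, Complex.norm_cpow_eq_rpow_re_of_pos ht, Complex.norm_real, Real.norm_of_nonneg
    (Int.fract_nonneg t)]
  simpa using mul_le_of_le_one_left (rpow_nonneg ht.le _) (Int.fract_lt_one t).le

lemma integrableOn_fract_mul_cpow {N : ℕ} (hN : N ≠ 0) {s : ℂ} (hs : 0 < s.re) :
    IntegrableOn (fun t : ℝ => ((Int.fract t : ℝ) : ℂ) * (t : ℂ) ^ (-s - 1)) (Set.Ioi (N : ℝ)) := by
  have hN' : (0 : ℝ) < N := by positivity
  refine (integrableOn_Ioi_rpow_of_lt (by linarith : -s.re - 1 < -1) hN').mono' ?_ ?_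
  · exact (Measurable.aestronglyMeasurable (by fun_prop))
  · filter_upwards [ae_restrict_mem measurableSet_Ioi] with t ht
    exact norm_fract_mul_cpow_le (hN'.trans ht) s

lemma norm_zetaRemainder_le {N : ℕ} (hN : N ≠ 0) {s : ℂ} (hs : 0 < s.re) :
    ‖zetaRemainder N s‖ ≤ (N : ℝ) ^ (-s.re) / s.re := by
  have hN' : (0 : ℝ) < N := by positivity
  have hs' : -s.re - 1 < -1 := by linarith
  calc ‖zetaRemainder N s‖ ≤ ∫ t in Set.Ioi (N : ℝ), t ^ (-s.re - 1) := by
        refine norm_integral_le_of_norm_le (integrableOn_Ioi_rpow_of_lt hs' hN') ?_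
        filter_upwards [ae_restrict_mem measurableSet_Ioi] with t ht
        exact norm_fract_mul_cpow_le (hN'.trans ht) s
    _ = (N : ℝ) ^ (-s.re) / s.re := by
        rw [integral_Ioi_rpow_of_lt hs' hN', sub_add_cancel, neg_div_neg_eq]

lemma zetaRemainder_eq_mellin (N : ℕ) (s : ℂ) :
    zetaRemainder N s =
      mellin ((Set.Ioi (N : ℝ)).indicator fun t => ((Int.fract t : ℝ) : ℂ)) (-s) := by
  rw [zetaRemainder, mellin, ← Set.inter_eq_right.2 (Set.Ioi_subset_Ioi N.cast_nonneg),
    ← setIntegral_indicator measurableSet_Ioi]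
  congr 1 with t
  by_cases ht : t ∈ Set.Ioi (N : ℝ) <;> simp [ht, mul_comm]

lemma differentiableAt_zetaRemainder {N : ℕ} (hN : N ≠ 0) {s : ℂ} (hs : 0 < s.re) :
    DifferentiableAt ℂ (zetaRemainder N) s := by
  set f := (Set.Ioi (N : ℝ)).indicator fun t => ((Int.fract t : ℝ) : ℂ) with hf
  have hf1 (t : ℝ) : ‖f t‖ ≤ 1 := by
    refine (norm_indicator_le_norm_self _ _).trans ?_
    simpa [abs_of_nonneg] using (Int.fract_lt_one t).le
  have hmeas : Measurable f := Measurable.indicator (by fun_prop) measurableSet_Ioi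
  have hloc : LocallyIntegrableOn f (Set.Ioi 0) :=
    ((locallyIntegrable_const (1 : ℝ)).mono hmeas.aestronglyMeasurable
      (.of_forall fun t => by simpa using hf1 t)).locallyIntegrableOn _
  have hzero : f =O[𝓝[>] 0] fun t : ℝ => t ^ (-(-s.re - 1)) := by
    have hev : ∀ᶠ t : ℝ in 𝓝[>] 0, f t = 0 := by
      filter_upwards [Ioo_mem_nhdsGT (show (0 : ℝ) < N by positivity)] with t ht
      simp [hf, ht.2.le]
    exact (isBigO_zero _ _).congr' (hev.mono fun t ht => ht.symm) .rfl
  have htop : f =O[atTop] fun t : ℝ => t ^ (-0 : ℝ) :=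
    .of_bound 1 (.of_forall fun t => by simpa using hf1 t)
  have hmellin := mellin_differentiableAt_of_isBigO_rpow (s := -s) hloc htop (by simpa) hzero
    (by simp)
  rw [funext (zetaRemainder_eq_mellin N)]
  exact hmellin.comp s differentiableAt_id.neg

lemma sum_Icc_ite_lt (N m : ℕ) :
    ∑ n ∈ Finset.Icc 1 m, (if N < n then 1 else 0 : ℂ) = ((m - N : ℕ) : ℂ) := by
  rw [Finset.sum_boole, ← Nat.card_Ioc]
  congr 2
  ext n
  simp only [Finset.mem_filter, Finset.mem_Icc, Finset.mem_Ioc]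
  omega

lemma LSeriesHasSum_ite_lt (N : ℕ) {s : ℂ} (hs : 1 < s.re) :
    LSeriesHasSum (fun n => if N < n then 1 else 0) s
      (riemannZeta s - ∑ n ∈ Finset.Icc 1 N, (n : ℂ) ^ (-s)) := by
  have hfin : HasSum (fun n => if n ∈ Finset.Icc 1 N then (n : ℂ) ^ (-s) else 0)
      (∑ n ∈ Finset.Icc 1 N, (n : ℂ) ^ (-s)) := by
    simpa only [Finset.sum_ite_mem, Finset.inter_self] using
      hasSum_sum_of_ne_finset_zero (s := Finset.Icc 1 N)
        (f := fun n => if n ∈ Finset.Icc 1 N then (n : ℂ) ^ (-s) else 0) (fun n hn => if_neg hn)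
  refine (HasSum.sub (LSeriesHasSum_one hs) hfin).congr_fun fun n => ?_
  rcases eq_or_ne n 0 with rfl | hn
  · simp
  · by_cases hnN : N < n
    · simp [LSeries.term_of_ne_zero hn, hnN, hnN.not_ge]
    · simp [LSeries.term_of_ne_zero hn, hnN, Nat.one_le_iff_ne_zero.2 hn, not_lt.1 hnN,
        Complex.cpow_neg]

lemma integral_Ioi_one_natFloor_sub_mul_cpow_eq_integral_Ioi {N : ℕ} (hN : N ≠ 0) (s : ℂ) :
    ∫ t in Set.Ioi (1 : ℝ), ((⌊t⌋₊ - N : ℕ) : ℂ) * (t : ℂ) ^ (-(s + 1)) =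
      ∫ t in Set.Ioi (N : ℝ), ((t : ℂ) ^ (-s) - N * (t : ℂ) ^ (-s - 1) -
        ((Int.fract t : ℝ) : ℂ) * (t : ℂ) ^ (-s - 1)) := by
  have hN1 : (1 : ℝ) ≤ N := mod_cast Nat.one_le_iff_ne_zero.2 hN
  rw [setIntegral_eq_of_subset_of_forall_sdiff_eq_zero measurableSet_Ioi
    (Set.Ioi_subset_Ioi hN1)]
  · refine setIntegral_congr_fun measurableSet_Ioi fun t ht => ?_
    have ht0 : 0 < t := zero_lt_one.trans (hN1.trans_lt ht)
    have hfloor : ((⌊t⌋₊ - N : ℕ) : ℂ) = t - N - ((Int.fract t : ℝ) : ℂ) := by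
      rw [Nat.cast_sub (Nat.le_floor (le_of_lt ht)), ← Int.self_sub_floor,
        ← natCast_floor_eq_intCast_floor ht0.le]
      push_cast
      ring
    have hcpow : (t : ℂ) ^ (-s) = t * (t : ℂ) ^ (-s - 1) := by
      rw [Complex.cpow_sub _ _ (by exact_mod_cast ht0.ne'), Complex.cpow_one,
        mul_div_cancel₀ _ (by exact_mod_cast ht0.ne')]
    simp only [hfloor, hcpow, neg_add']
    ring
  · rintro t ⟨-, ht⟩
    have : ⌊t⌋₊ - N = 0 := Nat.sub_eq_zero_of_le (Nat.floor_le_of_le (not_lt.1 ht))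
    simp [this]

lemma integral_Ioi_one_natFloor_sub_mul_cpow {N : ℕ} (hN : N ≠ 0) {s : ℂ} (hs : 1 < s.re) :
    s * ∫ t in Set.Ioi (1 : ℝ), ((⌊t⌋₊ - N : ℕ) : ℂ) * (t : ℂ) ^ (-(s + 1)) =
      (N : ℂ) ^ (1 - s) / (s - 1) - s * zetaRemainder N s := by
  have hN0 : (0 : ℝ) < N := by positivity
  have hs0 : s ≠ 0 := by rintro rfl; norm_num at hs
  have hs1 : s - 1 ≠ 0 := sub_ne_zero.2 (by rintro rfl; norm_num at hs)
  have hre : (-s).re < -1 := by simpa using hs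
  have hre' : (-s - 1).re < -1 := by simp; linarith
  rw [integral_Ioi_one_natFloor_sub_mul_cpow_eq_integral_Ioi hN, integral_sub, integral_sub,
    integral_const_mul, integral_Ioi_cpow_of_lt hre hN0,
    integral_Ioi_cpow_of_lt hre' hN0, ← zetaRemainder, Complex.ofReal_natCast,
    show -s - 1 + 1 = -s by ring, show (N : ℂ) ^ (-s + 1) = N * (N : ℂ) ^ (-s) by
      rw [Complex.cpow_add _ _ (mod_cast hN), Complex.cpow_one, mul_comm],
    show (N : ℂ) ^ (1 - s) = N * (N : ℂ) ^ (-s) by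
      rw [sub_eq_add_neg, Complex.cpow_add _ _ (mod_cast hN), Complex.cpow_one]]
  · have : -s + 1 ≠ 0 := by rwa [neg_add_eq_sub, ← neg_ne_zero, neg_sub]
    field_simp
    ring
  · exact integrableOn_Ioi_cpow_of_lt hre hN0
  · exact (integrableOn_Ioi_cpow_of_lt hre' hN0).const_mul _
  · exact (integrableOn_Ioi_cpow_of_lt hre hN0).sub
      ((integrableOn_Ioi_cpow_of_lt hre' hN0).const_mul _)
  · exact integrableOn_fract_mul_cpow hN (by linarith)

lemma riemannZeta_eq_sum_add_of_one_lt_re {N : ℕ} (hN : N ≠ 0) {s : ℂ} (hs : 1 < s.re) :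
    riemannZeta s = ∑ n ∈ Finset.Icc 1 N, (n : ℂ) ^ (-s) + (N : ℂ) ^ (1 - s) / (s - 1) -
      s * zetaRemainder N s := by
  have hsum := LSeriesHasSum_ite_lt N hs
  have hcard : (fun n : ℕ => ∑ k ∈ Finset.Icc 1 n, (if N < k then 1 else 0 : ℂ)) =O[atTop]
      fun n => (n : ℝ) ^ (1 : ℝ) := by
    refine .of_bound 1 (.of_forall fun n => ?_)
    simp only [sum_Icc_ite_lt, Complex.norm_natCast, rpow_one, one_mul, Real.norm_natCast]
    exact_mod_cast Nat.sub_le n N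
  have h := LSeries_eq_mul_integral _ zero_le_one hs hsum.LSeriesSummable hcard
  simp only [sum_Icc_ite_lt] at h
  rw [hsum.LSeries_eq, integral_Ioi_one_natFloor_sub_mul_cpow hN hs] at h
  linear_combination h

lemma riemannZeta₁_eq_sum_add {N : ℕ} (hN : N ≠ 0) {s : ℂ} (hs : 0 < s.re) :
    riemannZeta₁ s = (s - 1) * ∑ n ∈ Finset.Icc 1 N, (n : ℂ) ^ (-s) + (N : ℂ) ^ (1 - s) -
      (s - 1) * s * zetaRemainder N s := by
  have hU : IsOpen {s : ℂ | 0 < s.re} := isOpen_lt continuous_const Complex.continuous_re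
  have hN' : (N : ℂ) ≠ 0 := mod_cast hN
  have hrhs : DifferentiableOn ℂ (fun s => (s - 1) * ∑ n ∈ Finset.Icc 1 N, (n : ℂ) ^ (-s) +
      (N : ℂ) ^ (1 - s) - (s - 1) * s * zetaRemainder N s) {s : ℂ | 0 < s.re} := by
    intro z hz
    have hrem := differentiableAt_zetaRemainder hN hz
    have hsum : DifferentiableAt ℂ (fun s => ∑ n ∈ Finset.Icc 1 N, (n : ℂ) ^ (-s)) z :=
      .fun_sum fun n hn => differentiableAt_id.neg.const_cpow
        (.inl (mod_cast (Nat.one_le_iff_ne_zero.1 (Finset.mem_Icc.1 hn).1)))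
    have hcpow : DifferentiableAt ℂ (fun s => (N : ℂ) ^ (1 - s)) z :=
      (differentiableAt_id.const_sub 1).const_cpow (.inl hN')
    exact DifferentiableAt.differentiableWithinAt (by fun_prop)
  refine AnalyticOnNhd.eqOn_of_preconnected_of_eventuallyEq (z₀ := 2)
    (differentiable_riemannZeta₁.differentiableOn.analyticOnNhd hU) (hrhs.analyticOnNhd hU)
    (convex_halfSpace_re_gt 0).isPreconnected (by simp) ?_ hs
  filter_upwards [(isOpen_lt continuous_const Complex.continuous_re).mem_nhds
    (show (1 : ℝ) < (2 : ℂ).re by simp)] with z hz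
  have hz1 : z ≠ 1 := by rintro rfl; norm_num at hz
  have hz1' : z - 1 ≠ 0 := sub_ne_zero.2 hz1
  have h := riemannZeta_eq_sum_add_of_one_lt_re hN hz
  rw [riemannZeta_eq_inv_sub_mul hz1] at h
  field_simp at h
  linear_combination h

lemma riemannZeta_eq_sum_add {N : ℕ} (hN : N ≠ 0) {s : ℂ} (hs : 0 < s.re) (hs1 : s ≠ 1) :
    riemannZeta s = ∑ n ∈ Finset.Icc 1 N, (n : ℂ) ^ (-s) + (N : ℂ) ^ (1 - s) / (s - 1) -
      s * zetaRemainder N s := by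
  have := sub_ne_zero.2 hs1
  rw [riemannZeta_eq_inv_sub_mul hs1, riemannZeta₁_eq_sum_add hN hs]
  field_simp

lemma norm_riemannZeta_le {N : ℕ} (hN : N ≠ 0) {s : ℂ} (hs : 0 < s.re) (hs1 : s ≠ 1) :
    ‖riemannZeta s‖ ≤ ∑ n ∈ Finset.Icc 1 N, (n : ℝ) ^ (-s.re) +
      (N : ℝ) ^ (1 - s.re) / ‖s - 1‖ + ‖s‖ * ((N : ℝ) ^ (-s.re) / s.re) := by
  rw [riemannZeta_eq_sum_add hN hs hs1]
  refine (norm_sub_le _ _).trans (add_le_add ((norm_add_le _ _).trans (add_le_add ?_ ?_)) ?_)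
  · refine norm_sum_le_of_le _ fun n hn => ?_
    rw [Complex.norm_natCast_cpow_of_pos (Finset.mem_Icc.1 hn).1, Complex.neg_re]
  · rw [norm_div, Complex.norm_natCast_cpow_of_pos (by omega), Complex.sub_re, Complex.one_re]
  · rw [norm_mul]
    gcongr
    exact norm_zetaRemainder_le hN hs

lemma exists_sum_rpow_neg_le {δ : ℝ} (hδ : 0 < δ) :
    ∃ C : ℝ, ∀ (N : ℕ) (σ : ℝ), 1 - δ / 2 ≤ σ →
      ∑ n ∈ Finset.Icc 1 N, (n : ℝ) ^ (-σ) ≤ C * (N : ℝ) ^ δ := by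
  have hsum : Summable fun n : ℕ => (n : ℝ) ^ (-1 - δ / 2) :=
    Real.summable_nat_rpow.2 (by linarith)
  refine ⟨∑' n : ℕ, (n : ℝ) ^ (-1 - δ / 2), fun N σ hσ => ?_⟩
  calc ∑ n ∈ Finset.Icc 1 N, (n : ℝ) ^ (-σ)
      ≤ ∑ n ∈ Finset.Icc 1 N, (n : ℝ) ^ (-1 - δ / 2) * (N : ℝ) ^ δ := by
        refine Finset.sum_le_sum fun n hn => ?_
        obtain ⟨hn1, hnN⟩ := Finset.mem_Icc.1 hn
        have hn0 : (0 : ℝ) < n := by exact_mod_cast hn1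
        calc (n : ℝ) ^ (-σ) ≤ (n : ℝ) ^ ((-1 - δ / 2) + δ) :=
              rpow_le_rpow_of_exponent_le (by exact_mod_cast hn1) (by linarith)
          _ = (n : ℝ) ^ (-1 - δ / 2) * (n : ℝ) ^ δ := rpow_add hn0 _ _
          _ ≤ _ := by gcongr
    _ = (∑ n ∈ Finset.Icc 1 N, (n : ℝ) ^ (-1 - δ / 2)) * (N : ℝ) ^ δ := by rw [Finset.sum_mul]
    _ ≤ _ := by
        gcongr
        exact hsum.sum_le_tsum _ fun n _ => by positivity

lemma two_mul_rpow_le {t δ : ℝ} (ht : 0 ≤ t) (hδ : δ ≤ 1) : (2 * t) ^ δ ≤ 2 * t ^ δ := by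
  rw [mul_rpow zero_le_two ht]
  gcongr
  simpa using rpow_le_rpow_of_exponent_le one_le_two hδ

lemma exists_norm_riemannZeta_le {δ : ℝ} (hδ : 0 < δ) (hδ1 : δ ≤ 1) :
    ∃ C : ℝ, ∀ s : ℂ, 1 - δ / 2 ≤ s.re → 1 ≤ |s.im| → ‖riemannZeta s‖ ≤ C * |s.im| ^ δ := by
  obtain ⟨C, hC⟩ := exists_sum_rpow_neg_le hδ
  have hC0 : 0 ≤ C := zero_le_one.trans (by simpa using hC 1 1 (by linarith))
  refine ⟨(C + 1) * 2 + 3, fun s hσ ht => ?_⟩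
  set t := |s.im| with ht_def
  have hN : ⌈t⌉₊ ≠ 0 := (Nat.ceil_pos.2 (by linarith)).ne'
  have htN : t ≤ ⌈t⌉₊ := Nat.le_ceil t
  have hN1 : (1 : ℝ) ≤ ⌈t⌉₊ := ht.trans htN
  have hNpow : (⌈t⌉₊ : ℝ) ^ δ ≤ 2 * t ^ δ := by
    calc (⌈t⌉₊ : ℝ) ^ δ ≤ (2 * t) ^ δ := by
          gcongr
          linarith [Nat.ceil_lt_add_one (by linarith : 0 ≤ t)]
      _ ≤ 2 * t ^ δ := two_mul_rpow_le (by linarith) hδ1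
  have hs1 : s ≠ 1 := by rintro rfl; norm_num [ht_def] at ht
  have htn : 1 ≤ ‖s - 1‖ := ht.trans (by simpa using Complex.abs_im_le_norm (s - 1))
  have hpole : (⌈t⌉₊ : ℝ) ^ (1 - s.re) / ‖s - 1‖ ≤ (⌈t⌉₊ : ℝ) ^ δ :=
    (div_le_self (by positivity) htn).trans (rpow_le_rpow_of_exponent_le hN1 (by linarith))
  have hrem : ‖s‖ * ((⌈t⌉₊ : ℝ) ^ (-s.re) / s.re) ≤ 3 * t ^ δ := by
    have hσ0 : 0 < s.re := by linarith
    have hnorm : ‖s‖ / s.re ≤ 3 * t := by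
      rw [div_le_iff₀ hσ0]
      have := Complex.norm_le_abs_re_add_abs_im s
      rw [abs_of_pos hσ0, ← ht_def] at this
      nlinarith
    calc ‖s‖ * ((⌈t⌉₊ : ℝ) ^ (-s.re) / s.re) = ‖s‖ / s.re * (⌈t⌉₊ : ℝ) ^ (-s.re) := by ring
      _ ≤ 3 * t * t ^ (-s.re) := by
          gcongr ?_ * ?_
          exact rpow_le_rpow_of_nonpos (by linarith) htN (by linarith)
      _ = 3 * t ^ (1 - s.re) := by rw [mul_assoc, sub_eq_add_neg, rpow_add (by linarith), rpow_one]
      _ ≤ 3 * t ^ δ := by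
          gcongr
          linarith
  linarith [norm_riemannZeta_le hN (by linarith) hs1, hC ⌈t⌉₊ s.re hσ,
    mul_le_mul_of_nonneg_left hNpow (add_nonneg hC0 zero_le_one)]

lemma exists_norm_deriv_riemannZeta_le {δ : ℝ} (hδ : 0 < δ) (hδ1 : δ ≤ 1) :
    ∃ C : ℝ, ∀ s : ℂ, 1 - δ / 4 ≤ s.re → 2 ≤ |s.im| → ‖deriv riemannZeta s‖ ≤ C * |s.im| ^ δ := by
  obtain ⟨C, hC⟩ := exists_norm_riemannZeta_le hδ hδ1
  have hC0 : 0 ≤ C := by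
    simpa using (norm_nonneg _).trans (hC (1 + Complex.I) (by simp; linarith) (by simp))
  refine ⟨C * 2 / (δ / 4), fun s hσ ht => ?_⟩
  have hnear {z : ℂ} (hz : ‖z - s‖ ≤ δ / 4) :
      1 - δ / 2 ≤ z.re ∧ 1 ≤ |z.im| ∧ |z.im| ≤ 2 * |s.im| := by
    have hre := (Complex.abs_re_le_norm (z - s)).trans hz
    have him := (Complex.abs_im_le_norm (z - s)).trans hz
    rw [Complex.sub_re] at hre
    rw [Complex.sub_im] at him
    have := abs_sub_abs_le_abs_sub s.im z.im
    have := abs_sub_abs_le_abs_sub z.im s.im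
    rw [abs_sub_comm s.im] at *
    exact ⟨by linarith [(abs_le.1 hre).1], by linarith, by linarith⟩
  have hne {z : ℂ} (hz : ‖z - s‖ ≤ δ / 4) : z ≠ 1 := by
    rintro rfl
    simpa using (hnear hz).2.1.trans_lt' zero_lt_one
  have hdiff : DiffContOnCl ℂ riemannZeta (Metric.ball s (δ / 4)) := by
    refine DifferentiableOn.diffContOnCl fun z hz => ?_
    rw [closure_ball _ (by positivity), mem_closedBall_iff_norm] at hz
    exact (differentiableAt_riemannZeta (hne hz)).differentiableWithinAt
  have hsphere : ∀ z ∈ Metric.sphere s (δ / 4), ‖riemannZeta z‖ ≤ C * (2 * |s.im| ^ δ) := by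
    intro z hz
    obtain ⟨hre, him, him'⟩ := hnear (mem_sphere_iff_norm.1 hz).le
    refine (hC z hre him).trans ?_
    gcongr
    exact (rpow_le_rpow (by positivity) him' hδ.le).trans (two_mul_rpow_le (abs_nonneg _) hδ1)
  calc ‖deriv riemannZeta s‖ ≤ C * (2 * |s.im| ^ δ) / (δ / 4) :=
        Complex.norm_deriv_le_of_forall_mem_sphere_norm_le (by positivity) hdiff hsphere
    _ = C * 2 / (δ / 4) * |s.im| ^ δ := by ring

lemma exists_norm_riemannZeta_one_add_le :
    ∃ K : ℝ, 0 < K ∧ ∀ x : ℝ, 0 < x → x ≤ 1 → ‖riemannZeta (1 + x)‖ ≤ K / x := by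
  obtain ⟨K, hK⟩ := (isCompact_Icc (a := (0 : ℝ)) (b := 1)).exists_bound_of_continuousOn
    (f := fun x : ℝ => riemannZeta₁ (1 + x))
    (differentiable_riemannZeta₁.continuous.comp (by fun_prop)).continuousOn
  refine ⟨max K 1, by positivity, fun x hx hx1 => ?_⟩
  have hne : (1 + x : ℂ) ≠ 1 := by simpa using hx.ne'
  rw [riemannZeta_eq_inv_sub_mul hne, add_sub_cancel_left, norm_mul, norm_inv, Complex.norm_real,
    Real.norm_of_nonneg hx.le, inv_mul_eq_div]
  gcongr
  exact (hK x ⟨hx.le, hx1⟩).trans (le_max_left _ _)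

lemma one_le_norm_riemannZeta_product {x : ℝ} (hx : 0 < x) (y : ℝ) :
    1 ≤ ‖riemannZeta (1 + x)‖ ^ 3 * ‖riemannZeta (1 + x + Complex.I * y)‖ ^ 4 *
      ‖riemannZeta (1 + x + 2 * Complex.I * y)‖ := by
  have h := DirichletCharacter.norm_LFunction_product_ge_one (1 : DirichletCharacter ℂ 1) hx y
  simpa [DirichletCharacter.LFunctionTrivChar, DirichletCharacter.LFunction_modOne_eq] using h

lemma exists_sub_one_pow_three_le :
    ∃ K : ℝ, 1 ≤ K ∧ ∀ s : ℂ, 1 < s.re → s.re ≤ 2 →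
      (s.re - 1) ^ 3 ≤ K * ‖riemannZeta s‖ ^ 4 * ‖riemannZeta (s + Complex.I * s.im)‖ := by
  obtain ⟨K, hK0, hK⟩ := exists_norm_riemannZeta_one_add_le
  refine ⟨max (K ^ 3) 1, le_max_right _ _, fun s hs1 hs2 => ?_⟩
  have hx : 0 < s.re - 1 := by linarith
  have hs : 1 + ((s.re - 1 : ℝ) : ℂ) + Complex.I * s.im = s := by
    apply Complex.ext <;> simp
  have hs' : 1 + ((s.re - 1 : ℝ) : ℂ) + 2 * Complex.I * s.im = s + Complex.I * s.im := by
    linear_combination hs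
  have h := one_le_norm_riemannZeta_product hx s.im
  rw [hs, hs'] at h
  calc (s.re - 1) ^ 3 ≤ (s.re - 1) ^ 3 * ((K / (s.re - 1)) ^ 3 * ‖riemannZeta s‖ ^ 4 *
          ‖riemannZeta (s + Complex.I * s.im)‖) := by
        refine le_mul_of_one_le_right (by positivity) (h.trans ?_)
        gcongr
        exact hK _ hx (by linarith)
    _ = K ^ 3 * ‖riemannZeta s‖ ^ 4 * ‖riemannZeta (s + Complex.I * s.im)‖ := by
        field_simp
    _ ≤ _ := by gcongr; exact le_max_left _ _

lemma four_mul_le_norm_riemannZeta {K B τ : ℝ} (hK0 : 0 < K) (hB : 0 < B) (hτ : 0 < τ)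
    (hKB : 256 * K * B ^ 5 * τ = 1) {s : ℂ} (hs : 1 + τ ≤ s.re)
    (hK : (s.re - 1) ^ 3 ≤ K * ‖riemannZeta s‖ ^ 4 * ‖riemannZeta (s + Complex.I * s.im)‖)
    (h2 : ‖riemannZeta (s + Complex.I * s.im)‖ ≤ B) :
    4 * τ * B ≤ ‖riemannZeta s‖ := by
  have h : τ ^ 3 ≤ K * ‖riemannZeta s‖ ^ 4 * B :=
    calc τ ^ 3 ≤ (s.re - 1) ^ 3 := by gcongr; linarith
      _ ≤ _ := hK
      _ ≤ _ := by gcongr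
  refine le_of_pow_le_pow_left₀ four_ne_zero (norm_nonneg _) ?_
  refine le_of_mul_le_mul_left (a := K * B) ?_ (by positivity)
  calc K * B * (4 * τ * B) ^ 4 = 256 * K * B ^ 5 * τ * τ ^ 3 := by ring
    _ ≤ K * B * ‖riemannZeta s‖ ^ 4 := by rw [hKB]; linarith

lemma two_mul_le_norm_riemannZeta {B τ : ℝ} (hB : 0 < B) (hτ : 0 < τ) {y : ℝ} (hy : y ≠ 0)
    (hfar : ∀ s : ℂ, s.im = y → 1 + τ ≤ s.re → s.re ≤ 2 → 4 * τ * B ≤ ‖riemannZeta s‖)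
    (hderiv : ∀ s : ℂ, s.im = y → 1 - τ ≤ s.re → s.re ≤ 2 → ‖deriv riemannZeta s‖ ≤ B)
    (hτ1 : τ ≤ 1) {s : ℂ} (hsy : s.im = y) (hs1 : 1 - τ ≤ s.re) (hs2 : s.re ≤ 2) :
    2 * τ * B ≤ ‖riemannZeta s‖ := by
  rcases le_total (1 + τ) s.re with h | h
  · have := hfar s hsy h hs2
    have : 0 < τ * B := by positivity
    linarith
  set w : ℂ := ⟨1 + τ, y⟩ with hw
  have hconv : Convex ℝ ({z : ℂ | 1 - τ ≤ z.re} ∩ {z : ℂ | z.re ≤ 2} ∩ {z : ℂ | z.im = y}) :=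
    ((convex_halfSpace_re_ge _).inter (convex_halfSpace_re_le _)).inter
      (convex_hyperplane (IsLinearMap.mk Complex.add_im (by simp)) _)
  have hmean : ‖riemannZeta w - riemannZeta s‖ ≤ B * ‖w - s‖ := by
    refine hconv.norm_image_sub_le_of_norm_deriv_le (𝕜 := ℂ) (fun z hz => ?_)
      (fun z hz => hderiv z hz.2 hz.1.1 hz.1.2) ⟨⟨hs1, hs2⟩, hsy⟩
      ⟨⟨show 1 - τ ≤ 1 + τ by linarith, show 1 + τ ≤ 2 by linarith⟩, rfl⟩
    refine differentiableAt_riemannZeta ?_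
    rintro rfl
    exact hy (by simpa using hz.2.symm)
  have hdist : ‖w - s‖ ≤ 2 * τ := by
    have : w - s = ((1 + τ - s.re : ℝ) : ℂ) := by apply Complex.ext <;> simp [hw, hsy]
    rw [this, Complex.norm_real, Real.norm_of_nonneg (by linarith)]
    linarith
  have hfar_w := hfar w rfl le_rfl (show 1 + τ ≤ 2 by linarith)
  have := norm_sub_norm_le (riemannZeta w) (riemannZeta s)
  have : B * ‖w - s‖ ≤ B * (2 * τ) := by gcongr
  linarith

lemma norm_logDeriv_riemannZeta_le_one_div {K B τ : ℝ} (hK0 : 0 < K) (hB : 0 < B) (hτ : 0 < τ)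
    (hτ1 : τ ≤ 1) (hKB : 256 * K * B ^ 5 * τ = 1) {s : ℂ} (him : s.im ≠ 0) (hs1 : 1 - τ ≤ s.re)
    (hs2 : s.re ≤ 2)
    (hK : ∀ z : ℂ, 1 < z.re → z.re ≤ 2 →
      (z.re - 1) ^ 3 ≤ K * ‖riemannZeta z‖ ^ 4 * ‖riemannZeta (z + Complex.I * z.im)‖)
    (hzeta : ∀ z : ℂ, z.im = 2 * s.im → 1 < z.re → ‖riemannZeta z‖ ≤ B)
    (hderiv : ∀ z : ℂ, z.im = s.im → 1 - τ ≤ z.re → ‖deriv riemannZeta z‖ ≤ B) :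
    riemannZeta s ≠ 0 ∧ ‖logDeriv riemannZeta s‖ ≤ 1 / τ := by
  have hlow : 2 * τ * B ≤ ‖riemannZeta s‖ := by
    refine two_mul_le_norm_riemannZeta hB hτ him (fun z hz hz1 hz2 => ?_)
      (fun z hz hz1 _ => hderiv z hz hz1) hτ1 rfl hs1 hs2
    refine four_mul_le_norm_riemannZeta hK0 hB hτ hKB hz1 (hK z (by linarith) hz2)
      (hzeta _ ?_ ?_)
    · simp [hz, two_mul]
    · simp only [Complex.add_re, Complex.I_mul_re, Complex.ofReal_im, neg_zero, add_zero]
      linarith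
  have hpos : 0 < 2 * τ * B := by positivity
  refine ⟨norm_pos_iff.1 (hpos.trans_le hlow), ?_⟩
  calc ‖logDeriv riemannZeta s‖ ≤ B / (2 * τ * B) := by
        rw [logDeriv_apply, norm_div]
        gcongr
        exact hderiv s rfl hs1
    _ ≤ 1 / τ := by
        rw [div_le_div_iff₀ hpos hτ]
        nlinarith

lemma exists_norm_riemannZeta_le_and_norm_deriv_le {δ : ℝ} (hδ : 0 < δ) (hδ1 : δ ≤ 1) (C₀ : ℝ) :
    ∃ C : ℝ, C₀ ≤ C ∧ ∀ y z, 2 ≤ |y| → 1 - δ / 4 ≤ z.re → |y| ≤ |z.im| → |z.im| ≤ 2 * |y| →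
      ‖riemannZeta z‖ ≤ C * |y| ^ δ ∧ ‖deriv riemannZeta z‖ ≤ C * |y| ^ δ := by
  obtain ⟨C₁, hC₁⟩ := exists_norm_riemannZeta_le hδ hδ1
  obtain ⟨C₂, hC₂⟩ := exists_norm_deriv_riemannZeta_le hδ hδ1
  set C := max C₀ (max C₁ (max C₂ 0))
  have hC : ∀ D ≤ C, ∀ y x : ℝ, 0 ≤ x → x ≤ 2 * |y| → D * x ^ δ ≤ C * 2 * |y| ^ δ := by
    intro D hD y x hx hxy
    have : 0 ≤ C := by simp [C]
    rw [mul_assoc]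
    gcongr
    exact (rpow_le_rpow hx hxy hδ.le).trans (two_mul_rpow_le (abs_nonneg _) hδ1)
  refine ⟨C * 2, ?_, fun y z hy hz hyz hzy => ⟨?_, ?_⟩⟩
  · have : 0 ≤ C := by simp [C]
    have : C₀ ≤ C := by simp [C]
    linarith
  · exact (hC₁ z (by linarith) (by linarith)).trans (hC C₁ (by simp [C]) y _ (abs_nonneg _) hzy)
  · exact (hC₂ z hz (by linarith)).trans (hC C₂ (by simp [C]) y _ (abs_nonneg _) hzy)

lemma exists_norm_logDeriv_riemannZeta_le {δ : ℝ} (hδ : 0 < δ) (hδ1 : δ ≤ 1) :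
    ∃ c : ℝ, 0 < c ∧ c ≤ 1 ∧ ∀ s : ℂ, 2 ≤ |s.im| → 1 - c * |s.im| ^ (-(5 * δ)) ≤ s.re →
      s.re ≤ 2 → riemannZeta s ≠ 0 ∧ ‖logDeriv riemannZeta s‖ ≤ |s.im| ^ (5 * δ) / c := by
  obtain ⟨K, hK1, hK⟩ := exists_sub_one_pow_three_le
  obtain ⟨C, hC, hbound⟩ := exists_norm_riemannZeta_le_and_norm_deriv_le hδ hδ1 (4 / δ)
  have hC1 : 1 ≤ C := by
    refine le_trans ?_ hC
    rw [le_div_iff₀ hδ]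
    linarith
  have hKC : 1 ≤ K * C ^ 5 := one_le_mul_of_one_le_of_one_le hK1 (one_le_pow₀ hC1)
  refine ⟨1 / (256 * K * C ^ 5), by positivity, ?_, fun s ht hs1 hs2 => ?_⟩
  · rw [div_le_one₀ (by positivity)]
    linarith
  set B := C * |s.im| ^ δ with hB
  have ht0 : 0 < |s.im| := by linarith
  have hCB : C ≤ B := le_mul_of_one_le_right (by linarith) (one_le_rpow (by linarith) hδ.le)
  have hB0 : 0 < B := by linarith
  have hBpow : B ^ 5 = C ^ 5 * |s.im| ^ (5 * δ) := by
    rw [hB, mul_pow, ← rpow_mul_natCast ht0.le, mul_comm δ]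
    norm_num
  set τ := 1 / (256 * K * B ^ 5) with hτ
  have hτ0 : 0 < τ := by positivity
  have hcτ : 1 / (256 * K * C ^ 5) * |s.im| ^ (-(5 * δ)) = τ := by
    rw [hτ, hBpow, rpow_neg ht0.le]
    field_simp
  have hτδ : τ ≤ δ / 4 := by
    rw [hτ, one_div_le (by positivity) (by positivity), one_div_div]
    have : B ≤ B ^ 5 := le_self_pow₀ (hC1.trans hCB) (by norm_num)
    have : B ^ 5 ≤ K * B ^ 5 := le_mul_of_one_le_left (by positivity) hK1
    nlinarith
  rw [hcτ] at hs1
  have hconst : |s.im| ^ (5 * δ) / (1 / (256 * K * C ^ 5)) = 1 / τ := by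
    rw [hτ, hBpow]
    field_simp
  rw [hconst]
  refine norm_logDeriv_riemannZeta_le_one_div (by linarith) hB0 hτ0 (by linarith)
    (by rw [hτ]; field_simp) (abs_pos.1 ht0) hs1 hs2 hK (fun z hz hz1 => ?_) (fun z hz hz1 => ?_)
  · have : |z.im| = 2 * |s.im| := by rw [hz, abs_mul, abs_two]
    exact (hbound s.im z ht (by linarith) (by linarith) (by linarith)).1
  · exact (hbound s.im z ht (by linarith) (by rw [hz]) (by rw [hz]; linarith)).2

end Zeta

section PsiErrorTransform

/-- The function `-(ζ₁'/ζ₁)(s) / (s (s + 1))` with `ζ₁(s) = (s - 1) ζ(s)`. It is the Mellin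
transform of the smoothed error term of the prime number theorem; using `ζ₁` instead of `ζ` takes
out the main term. -/
noncomputable def psiErrorTransform (s : ℂ) : ℂ :=
  -logDeriv riemannZeta₁ s / (s * (s + 1))

lemma logDeriv_riemannZeta₁ {s : ℂ} (hs : s ≠ 1) (hζ : riemannZeta s ≠ 0) :
    logDeriv riemannZeta₁ s = 1 / (s - 1) + logDeriv riemannZeta s := by
  have hmul : riemannZeta₁ =ᶠ[nhds s] fun z => (z - 1) * riemannZeta z := by
    filter_upwards [isOpen_ne.mem_nhds hs] with z hz
    rw [riemannZeta_eq_inv_sub_mul hz, mul_inv_cancel_left₀ (sub_ne_zero.2 hz)]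
  rw [logDeriv_apply, hmul.deriv_eq, hmul.eq_of_nhds, ← logDeriv_apply,
    logDeriv_mul (f := fun z => z - 1) s (sub_ne_zero.2 hs) hζ (by fun_prop)
      (differentiableAt_riemannZeta hs)]
  simp [logDeriv_apply]

lemma riemannZeta₁_ne_zero {s : ℂ} (hζ : riemannZeta s ≠ 0) : riemannZeta₁ s ≠ 0 := by
  rcases eq_or_ne s 1 with rfl | hs
  · simp
  · rw [riemannZeta_eq_inv_sub_mul hs] at hζ
    exact right_ne_zero_of_mul hζ

lemma analyticAt_psiErrorTransform {s : ℂ} (hζ : riemannZeta s ≠ 0) (hs : s * (s + 1) ≠ 0) :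
    AnalyticAt ℂ psiErrorTransform s := by
  have hζ₁ := differentiable_riemannZeta₁.analyticAt s
  exact ((hζ₁.deriv.div hζ₁ (riemannZeta₁_ne_zero hζ)).neg).div (by fun_prop) hs

lemma analyticAt_psiErrorTransform_of_one_le_re {s : ℂ} (hs : 1 ≤ s.re) :
    AnalyticAt ℂ psiErrorTransform s :=
  analyticAt_psiErrorTransform (riemannZeta_ne_zero_of_one_le_re hs)
    (mul_ne_zero (Complex.ne_zero_of_re_pos (by linarith))
      (Complex.ne_zero_of_re_pos (by simp; linarith)))

lemma exists_norm_psiErrorTransform_le {ε : ℝ} (hε : 0 < ε) (hε1 : ε ≤ 1) :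
    ∃ c : ℝ, 0 < c ∧ c ≤ 1 ∧ ∀ s : ℂ, 2 ≤ |s.im| → 1 - c * |s.im| ^ (-ε) ≤ s.re → s.re ≤ 2 →
      AnalyticAt ℂ psiErrorTransform s ∧
        ‖psiErrorTransform s‖ ≤ 2 / c * (|s.im| ^ ε / |s.im| ^ 2) := by
  obtain ⟨c, hc0, hc1, hc⟩ := exists_norm_logDeriv_riemannZeta_le (δ := ε / 5) (by positivity)
    (by linarith)
  rw [mul_div_cancel₀ ε (by norm_num : (5 : ℝ) ≠ 0)] at hc
  refine ⟨c, hc0, hc1, fun s ht hs1 hs2 => ?_⟩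
  obtain ⟨hζ, hL⟩ := hc s ht hs1 hs2
  have ht0 : 0 < |s.im| := by linarith
  have hs : |s.im| ≤ ‖s‖ := Complex.abs_im_le_norm s
  have hs' : |s.im| ≤ ‖s + 1‖ := by simpa using Complex.abs_im_le_norm (s + 1)
  have hs'' : |s.im| ≤ ‖s - 1‖ := by simpa using Complex.abs_im_le_norm (s - 1)
  have hs_ne : s ≠ 1 := by rintro rfl; norm_num at ht
  refine ⟨analyticAt_psiErrorTransform hζ (mul_ne_zero (norm_pos_iff.1 (by linarith))
    (norm_pos_iff.1 (by linarith))), ?_⟩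
  have hpole : ‖1 / (s - 1)‖ ≤ |s.im| ^ ε / c := by
    calc ‖1 / (s - 1)‖ ≤ 1 := by
          rw [norm_div, norm_one]
          exact div_le_one_of_le₀ (by linarith) (norm_nonneg _)
      _ ≤ |s.im| ^ ε / c :=
          (one_le_div hc0).2 (hc1.trans (one_le_rpow (by linarith) hε.le))
  rw [psiErrorTransform, norm_div, norm_neg, norm_mul, logDeriv_riemannZeta₁ hs_ne hζ]
  calc _ ≤ (|s.im| ^ ε / c + |s.im| ^ ε / c) / (|s.im| * |s.im|) := by
        gcongr
        exact (norm_add_le _ _).trans (add_le_add hpole hL)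
    _ = _ := by ring

lemma exists_forall_mem_closedBall_norm_psiErrorTransform_le {ε : ℝ} (hε : 0 < ε) (hε1 : ε ≤ 1) :
    ∃ c : ℝ, 0 < c ∧ ∀ s : ℂ, 1 ≤ s.re → s.re ≤ 3 / 2 → 3 ≤ |s.im| →
      ∀ z ∈ Metric.closedBall s (c / (2 * |s.im|) ^ ε), AnalyticAt ℂ psiErrorTransform z ∧
        ‖psiErrorTransform z‖ ≤ 4 / c * ((2 * |s.im|) ^ ε / |s.im| ^ 2) := by
  obtain ⟨c, hc0, hc1, hc⟩ := exists_norm_psiErrorTransform_le hε hε1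
  refine ⟨c / 2, by positivity, fun s hs1 hs2 ht z hz => ?_⟩
  set t := |s.im|
  set q := (2 * t) ^ ε
  have hq1 : 1 ≤ q := one_le_rpow (by linarith) hε.le
  set r := c / 2 / q with hr
  have hr2 : r ≤ 1 / 2 := (div_le_self (by positivity) hq1).trans (by linarith)
  rw [Metric.mem_closedBall, dist_eq_norm] at hz
  have hre : |z.re - s.re| ≤ r := by simpa using (Complex.abs_re_le_norm (z - s)).trans hz
  have him : |z.im - s.im| ≤ r := by simpa using (Complex.abs_im_le_norm (z - s)).trans hz
  obtain ⟨hre1, hre2⟩ := abs_le.1 hre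
  obtain ⟨him1, him2⟩ := abs_le.1 ((abs_abs_sub_abs_le_abs_sub _ _).trans him)
  have hz0 : 0 < |z.im| := by linarith
  have hqz : |z.im| ^ ε ≤ q := rpow_le_rpow hz0.le (by linarith) hε.le
  have hrz : r ≤ c * |z.im| ^ (-ε) := by
    rw [rpow_neg hz0.le, ← div_eq_mul_inv]
    exact div_le_div₀ hc0.le (by linarith) (by positivity) hqz
  obtain ⟨hF, hF_le⟩ := hc z (by linarith) (by linarith) (by linarith)
  refine ⟨hF, hF_le.trans ?_⟩
  calc 2 / c * (|z.im| ^ ε / |z.im| ^ 2) ≤ 2 / c * (q / (t ^ 2 / 4)) := by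
        gcongr
        nlinarith
    _ = _ := by field_simp

lemma norm_iteratedDeriv_le_of_forall_mem_closedBall {f : ℂ → ℂ} {c : ℂ} {r C : ℝ} (n : ℕ)
    (hr : 0 < r) (hf : ∀ z ∈ Metric.closedBall c r, AnalyticAt ℂ f z ∧ ‖f z‖ ≤ C) :
    ‖iteratedDeriv n f c‖ ≤ n.factorial * C / r ^ n :=
  Complex.norm_iteratedDeriv_le_of_forall_mem_sphere_norm_le n hr
    (DifferentiableOn.diffContOnCl_ball (U := Metric.closedBall c r)
      (fun z hz => (hf z hz).1.differentiableAt.differentiableWithinAt) le_rfl)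
    (fun z hz => (hf z (Metric.sphere_subset_closedBall hz)).2)

lemma exists_norm_iteratedDeriv_psiErrorTransform_le_of_three_le (n : ℕ) :
    ∃ C : ℝ, 0 < C ∧ ∀ s : ℂ, 1 ≤ s.re → s.re ≤ 3 / 2 → 3 ≤ |s.im| →
      ‖iteratedDeriv n psiErrorTransform s‖ ≤ C * |s.im| ^ (-(3 / 2) : ℝ) := by
  set ε : ℝ := 1 / (2 * (n + 1)) with hε
  have hε0 : 0 < ε := by positivity
  have hε1 : ε ≤ 1 := div_le_one_of_le₀ (by linarith [n.cast_nonneg (α := ℝ)]) (by positivity)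
  obtain ⟨c, hc0, hc⟩ := exists_forall_mem_closedBall_norm_psiErrorTransform_le hε0 hε1
  refine ⟨n.factorial * 8 / c ^ (n + 1), by positivity, fun s hs1 hs2 ht => ?_⟩
  set t := |s.im|
  have ht0 : 0 < t := by linarith
  set q := (2 * t) ^ ε with hq
  have : 0 < q := by positivity
  have hqpow : q ^ (n + 1) ≤ 2 * t ^ (1 / 2 : ℝ) := by
    have hexp : ε * (n + 1 : ℕ) = 1 / 2 := by rw [hε]; push_cast; field_simp
    rw [hq, ← rpow_mul_natCast (by positivity), hexp, mul_rpow two_pos.le ht0.le]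
    gcongr
    exact rpow_le_self_of_one_le one_le_two (by norm_num)
  calc _ ≤ n.factorial * (4 / c * (q / t ^ 2)) / (c / q) ^ n :=
        norm_iteratedDeriv_le_of_forall_mem_closedBall n (by positivity) (hc s hs1 hs2 ht)
    _ = n.factorial * 4 / c ^ (n + 1) * (q ^ (n + 1) / t ^ 2) := by
        rw [div_pow]
        field_simp
        ring
    _ ≤ n.factorial * 4 / c ^ (n + 1) * (2 * t ^ (1 / 2 : ℝ) / t ^ 2) := by gcongr
    _ = n.factorial * 8 / c ^ (n + 1) * t ^ (1 / 2 - 2 : ℝ) := by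
        rw [rpow_sub ht0, rpow_two]
        ring
    _ = _ := by norm_num only

lemma exists_norm_iteratedDeriv_psiErrorTransform_le (n : ℕ) :
    ∃ C : ℝ, ∀ s : ℂ, 1 ≤ s.re → s.re ≤ 3 / 2 →
      ‖iteratedDeriv n psiErrorTransform s‖ ≤ C * (1 + |s.im|) ^ (-(3 / 2) : ℝ) := by
  obtain ⟨C, hC0, hC⟩ := exists_norm_iteratedDeriv_psiErrorTransform_le_of_three_le n
  obtain ⟨M, hM⟩ := ((isCompact_Icc (a := (1 : ℝ)) (b := 3 / 2)).reProdIm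
    (isCompact_Icc (a := (-3 : ℝ)) (b := 3))).exists_bound_of_continuousOn
    (f := iteratedDeriv n psiErrorTransform) fun s hs => by
      rw [iteratedDeriv_eq_iterate]
      exact ((analyticAt_psiErrorTransform_of_one_le_re
        hs.1.1).iterated_deriv n).continuousAt.continuousWithinAt
  have hhalf : (2 : ℝ)⁻¹ ^ (-(3 / 2) : ℝ) ≤ 4 := by
    rw [rpow_neg (by norm_num), inv_rpow two_pos.le, inv_inv]
    calc (2 : ℝ) ^ (3 / 2 : ℝ) ≤ 2 ^ (2 : ℝ) := by gcongr <;> norm_num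
      _ = 4 := by norm_num
  refine ⟨max (|M| * 4 ^ (3 / 2 : ℝ)) (C * 4), fun s hs1 hs2 => ?_⟩
  rcases le_total |s.im| 3 with h | h
  · calc _ ≤ |M| := (hM s ⟨⟨hs1, hs2⟩, abs_le.1 h⟩).trans (le_abs_self M)
      _ = |M| * 4 ^ (3 / 2 : ℝ) * 4 ^ (-(3 / 2) : ℝ) := by
          rw [mul_assoc, ← rpow_add four_pos]
          simp
      _ ≤ _ := mul_le_mul (le_max_left _ _)
          (rpow_le_rpow_of_nonpos (by positivity) (by linarith) (by norm_num))
          (by positivity) (by positivity)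
  · calc _ ≤ C * |s.im| ^ (-(3 / 2) : ℝ) := hC s hs1 hs2 h
      _ ≤ C * (2⁻¹ * (1 + |s.im|)) ^ (-(3 / 2) : ℝ) := by
          gcongr C * ?_
          exact rpow_le_rpow_of_nonpos (by positivity) (by linarith) (by norm_num)
      _ = C * 2⁻¹ ^ (-(3 / 2) : ℝ) * (1 + |s.im|) ^ (-(3 / 2) : ℝ) := by
          rw [mul_rpow (by norm_num) (by positivity), mul_assoc]
      _ ≤ _ := by
          gcongr
          exact (mul_le_mul_of_nonneg_left hhalf hC0.le).trans (le_max_right _ _)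

end PsiErrorTransform

section Mellin

open MeasureTheory Asymptotics
open scoped Topology

variable {E : Type*} [NormedAddCommGroup E] [NormedSpace ℂ E]

lemma hasMellin_congr {f g : ℝ → E} {s : ℂ} {m : E} (hf : HasMellin f s m)
    (hfg : Set.EqOn f g (Set.Ioi 0)) : HasMellin g s m := by
  have h : Set.EqOn (fun t : ℝ => (t : ℂ) ^ (s - 1) • f t) (fun t : ℝ => (t : ℂ) ^ (s - 1) • g t)
      (Set.Ioi 0) := fun t ht => by simp only [hfg ht]
  exact ⟨hf.1.congr_fun h measurableSet_Ioi,
    (setIntegral_congr_fun measurableSet_Ioi h).symm.trans hf.2⟩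

lemma hasMellin_const_mul_comp_mul_left {φ : ℝ → ℂ} {s : ℂ} (hφ : MellinConvergent φ s) (c : ℂ)
    {r : ℝ} (hr : 0 < r) :
    HasMellin (fun t => c * φ (r * t)) s (c * (r : ℂ) ^ (-s) * mellin φ s) := by
  refine ⟨((MellinConvergent.comp_mul_left hr).2 hφ).const_smul c, ?_⟩
  have h := mellin_const_smul (fun t => φ (r * t)) s c
  simp only [mellin_comp_mul_left φ s hr, smul_eq_mul] at h
  rw [h, mul_assoc]

lemma integral_norm_cpow_smul_comp_mul_left (φ : ℝ → E) (s : ℂ) {r : ℝ} (hr : 0 < r) :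
    ∫ t in Set.Ioi (0 : ℝ), ‖(t : ℂ) ^ (s - 1) • φ (r * t)‖ =
      r ^ (-s.re) * ∫ t in Set.Ioi (0 : ℝ), ‖(t : ℂ) ^ (s - 1) • φ t‖ := by
  have h := integral_comp_mul_left_Ioi (fun t : ℝ => ‖(t : ℂ) ^ (s - 1) • φ t‖) 0 hr
  rw [mul_zero, smul_eq_mul, eq_inv_mul_iff_mul_eq₀ hr.ne'] at h
  rw [← h, ← mul_assoc, ← integral_const_mul]
  refine setIntegral_congr_fun measurableSet_Ioi fun t (ht : 0 < t) => ?_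
  simp only [norm_smul, Complex.norm_cpow_eq_rpow_re_of_pos ht,
    Complex.norm_cpow_eq_rpow_re_of_pos (mul_pos hr ht), mul_rpow hr.le ht.le, Complex.sub_re,
    Complex.one_re]
  rw [rpow_sub_one hr.ne', rpow_neg hr.le]
  field_simp

lemma mellin_tsum_mul_comp_mul_left {φ : ℝ → ℂ} {a : ℕ → ℂ} {s : ℂ} (ha : LSeriesSummable a s)
    (ha0 : a 0 = 0) (hφ : MellinConvergent φ s) :
    mellin (fun t => ∑' n : ℕ, a n * φ (n * t)) s = LSeries a s * mellin φ s := by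
  have hmellin (n : ℕ) :
      HasMellin (fun t => a n * φ (n * t)) s (LSeries.term a s n * mellin φ s) := by
    rcases Nat.eq_zero_or_pos n with rfl | hn
    · simpa [ha0] using ⟨by simp [MellinConvergent], by simp [mellin]⟩
    · rw [LSeries.term_of_ne_zero hn.ne', div_eq_mul_inv, ← Complex.cpow_neg]
      exact_mod_cast hasMellin_const_mul_comp_mul_left hφ (a n) (Nat.cast_pos.2 hn)
  have hnorm (n : ℕ) : ∫ t : ℝ in Set.Ioi 0, ‖(t : ℂ) ^ (s - 1) • (a n * φ (n * t))‖ =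
      ‖LSeries.term a s n‖ * ∫ t : ℝ in Set.Ioi 0, ‖(t : ℂ) ^ (s - 1) • φ t‖ := by
    rcases Nat.eq_zero_or_pos n with rfl | hn
    · simp [ha0]
    · have h := integral_norm_cpow_smul_comp_mul_left φ s (Nat.cast_pos (α := ℝ).2 hn)
      simp only [smul_eq_mul, norm_mul] at h ⊢
      simp only [mul_left_comm _ ‖a n‖, integral_const_mul, h]
      rw [LSeries.term_of_ne_zero hn.ne', norm_div, Complex.norm_natCast_cpow_of_pos hn,
        rpow_neg n.cast_nonneg]
      ring
  have h := hasSum_integral_of_summable_integral_norm (fun n => (hmellin n).1)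
    (by simpa only [hnorm] using ha.norm.mul_right _)
  rw [LSeries, ← tsum_mul_right, ← tsum_congr fun n => (hmellin n).2]
  simp_rw [mellin, h.tsum_eq, smul_eq_mul, tsum_mul_left]

lemma hasMellin_max_one_sub {s : ℂ} (hs : 0 < s.re) :
    HasMellin (fun t : ℝ => ((max 0 (1 - t) : ℝ) : ℂ)) s (1 / (s * (s + 1))) := by
  have h1 := hasMellin_one_Ioc hs
  have ht := hasMellin_cpow_Ioc 1 (s := s) (by simp; linarith)
  have h := hasMellin_sub h1.1 ht.1
  have hs0 : s ≠ 0 := Complex.ne_zero_of_re_pos hs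
  have hs1 : s + 1 ≠ 0 := Complex.ne_zero_of_re_pos (by simp; linarith)
  rw [h1.2, ht.2, show 1 / s - 1 / (s + 1) = 1 / (s * (s + 1)) by field_simp; ring] at h
  refine hasMellin_congr h fun t (ht : 0 < t) => ?_
  rcases le_or_gt t 1 with h | h
  · simp [Set.indicator, ht, h]
  · simp [Set.indicator, h.not_ge, h.le]

lemma hasMellin_max_one_sub_sq_div {s : ℂ} (hs : 1 < s.re) :
    HasMellin (fun t : ℝ => ((max 0 (1 - t) ^ 2 / (2 * t) : ℝ) : ℂ)) s
      (1 / ((s - 1) * s * (s + 1))) := by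
  have h1 := hasMellin_one_Ioc (s := s) (by linarith)
  have ht := hasMellin_cpow_Ioc 1 (s := s) (by simp; linarith)
  have htinv := hasMellin_cpow_Ioc (-1) (s := s) (by simp; linarith)
  have hadd := hasMellin_add (ht.1.const_smul (1 / 2 : ℂ)) (htinv.1.const_smul (1 / 2 : ℂ))
  have h := hasMellin_sub hadd.1 h1.1
  have hs0 : s ≠ 0 := Complex.ne_zero_of_re_pos (by linarith)
  have hs1 : s + 1 ≠ 0 := Complex.ne_zero_of_re_pos (by simp; linarith)
  have hs2 : s - 1 ≠ 0 := Complex.ne_zero_of_re_pos (by simpa using hs)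
  rw [hadd.2, mellin_const_smul, mellin_const_smul, h1.2, ht.2, htinv.2,
    show (1 / 2 : ℂ) • (1 / (s + 1)) + (1 / 2 : ℂ) • (1 / (s + -1)) - 1 / s =
      1 / ((s - 1) * s * (s + 1)) by
        rw [← sub_eq_add_neg, smul_eq_mul, smul_eq_mul]; field_simp; ring] at h
  refine hasMellin_congr h fun t (ht : 0 < t) => ?_
  have ht' : (t : ℂ) ≠ 0 := by exact_mod_cast ht.ne'
  rcases le_or_gt t 1 with h | h
  · simp only [Set.indicator, Set.mem_Ioc, ht, h, and_self, ↓reduceIte, Complex.cpow_one,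
      Complex.cpow_neg_one, smul_eq_mul, sub_nonneg, max_eq_right]
    push_cast
    field_simp
    ring
  · simp [Set.indicator, h.not_ge, h.le]

lemma isBigO_rpow_zero_log_pow_smul {f : ℝ → E} {b c : ℝ} (hbc : b < c)
    (hf : f =O[𝓝[>] 0] (· ^ (-b))) (n : ℕ) :
    (fun t : ℝ => Real.log t ^ n • f t) =O[𝓝[>] 0] (· ^ (-c)) := by
  induction n generalizing c with
  | zero =>
    simp only [pow_zero, one_smul]
    refine hf.trans (.of_bound' ?_)
    filter_upwards [Ioc_mem_nhdsGT one_pos] with t ht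
    simpa only [Real.norm_of_nonneg (rpow_nonneg ht.1.le _)] using
      rpow_le_rpow_of_exponent_ge ht.1 ht.2 (neg_le_neg hbc.le)
  | succ n ih =>
    obtain ⟨d, hbd, hdc⟩ := exists_between hbc
    simpa only [pow_succ', mul_smul] using isBigO_rpow_zero_log_smul hdc (ih hbd)

lemma hasMellin_log_pow_smul {f : ℝ → E} {g : ℂ → E} {b : ℝ} (hfc : ContinuousOn f (Set.Ioi 0))
    (hf_top : f =ᶠ[atTop] 0) (hf_bot : f =O[𝓝[>] 0] (· ^ (-b)))
    (hg : ∀ s : ℂ, b < s.re → mellin f s = g s) (n : ℕ) {s : ℂ} (hs : b < s.re) :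
    HasMellin (fun y : ℝ => Real.log y ^ n • f y) s (iteratedDeriv n g s) := by
  have hO (f : ℝ → E) (a : ℝ) (hf : f =ᶠ[atTop] 0) : f =O[atTop] (· ^ (-a)) :=
    hf.trans_isBigO (isBigO_zero _ _)
  induction n generalizing s with
  | zero =>
    simpa using ⟨mellinConvergent_of_isBigO_rpow (hfc.locallyIntegrableOn measurableSet_Ioi)
      (hO f (s.re + 1) hf_top) (by linarith) hf_bot hs, hg s hs⟩
  | succ n ih =>
    obtain ⟨c, hbc, hcs⟩ := exists_between hs
    have h := mellin_hasDerivAt_of_isBigO_rpow (f := fun y => Real.log y ^ n • f y)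
      (a := s.re + 1) (ContinuousOn.locallyIntegrableOn (((continuousOn_log.mono
        fun y (hy : 0 < y) => hy.ne').pow n).smul hfc) measurableSet_Ioi)
      (hO _ _ (hf_top.mono fun y hy => by simp [hy])) (by linarith)
      (isBigO_rpow_zero_log_pow_smul hbc hf_bot n) hcs
    have hderiv : iteratedDeriv n g =ᶠ[𝓝 s] mellin fun y => Real.log y ^ n • f y := by
      filter_upwards [(isOpen_lt continuous_const Complex.continuous_re).mem_nhds hs] with z hz
      exact (ih hz).2.symm
    rw [iteratedDeriv_succ, hderiv.deriv_eq, h.2.deriv]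
    simpa only [pow_succ', mul_smul] using ⟨h.1, rfl⟩

lemma norm_le_of_norm_mellin_le [CompleteSpace E] {f : ℝ → E} {σ y : ℝ} {φ : ℝ → ℝ} (hy : 0 < y)
    (hf : MellinConvergent f σ) (hfc : ContinuousAt f y)
    (hmeas : AEStronglyMeasurable fun t : ℝ => mellin f (σ + t * Complex.I)) (hφ : Integrable φ)
    (hle : ∀ t : ℝ, ‖mellin f (σ + t * Complex.I)‖ ≤ φ t) :
    ‖f y‖ ≤ y ^ (-σ) * ∫ t, φ t := by
  rw [← mellinInv_mellin_eq σ f hy hf (hφ.mono' hmeas (.of_forall hle)) hfc, mellinInv, norm_smul]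
  have hπ : ‖(1 / (2 * π) : ℝ)‖ ≤ 1 := by
    rw [Real.norm_of_nonneg (by positivity), div_le_one (by positivity)]
    linarith [pi_gt_three]
  refine (mul_le_of_le_one_left (norm_nonneg _) hπ).trans ?_
  rw [← integral_const_mul]
  refine norm_integral_le_of_norm_le (hφ.const_mul _) (.of_forall fun t => ?_)
  rw [norm_smul, Complex.norm_cpow_eq_rpow_re_of_pos hy]
  simpa using mul_le_mul_of_nonneg_left (hle t) (rpow_nonneg hy.le (-σ))

end Mellin

section PrimeNumberTheorem

open MeasureTheory Asymptotics
open scoped Topology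

/-- The smoothed Chebyshev function `∑ n, Λ n * (1 - n * y)⁺`, so that
`x * psiSmooth x⁻¹ = ∫ t in 0..x, ψ t`. -/
noncomputable def psiSmooth (y : ℝ) : ℝ := ∑' n : ℕ, Λ n * max 0 (1 - n * y)

lemma psiSmooth_eq_sum {y : ℝ} (hy : 0 < y) {N : ℕ} (hN : ⌊1 / y⌋₊ ≤ N) :
    psiSmooth y = ∑ n ∈ Finset.Ioc 0 N, Λ n * max 0 (1 - n * y) := by
  refine tsum_eq_sum fun n hn => ?_
  rw [Finset.mem_Ioc, not_and_or, not_lt, not_le] at hn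
  rcases hn with hn | hn
  · simp [Nat.le_zero.1 hn]
  · have h := (Nat.floor_lt (by positivity)).1 (hN.trans_lt hn)
    rw [div_lt_iff₀ hy] at h
    rw [max_eq_left (by linarith), mul_zero]

lemma psiSmooth_nonneg (y : ℝ) : 0 ≤ psiSmooth y :=
  tsum_nonneg fun _ => mul_nonneg vonMangoldt_nonneg (le_max_left _ _)

lemma psiSmooth_le {y : ℝ} (hy : 0 < y) : psiSmooth y ≤ (Real.log 4 + 4) / y := by
  rw [psiSmooth_eq_sum hy le_rfl]
  calc ∑ n ∈ Finset.Ioc 0 ⌊1 / y⌋₊, Λ n * max 0 (1 - n * y) ≤ Chebyshev.psi (1 / y) := by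
        refine Finset.sum_le_sum fun n _ => mul_le_of_le_one_right vonMangoldt_nonneg
          (max_le zero_le_one ?_)
        linarith [show 0 ≤ n * y by positivity]
    _ ≤ (Real.log 4 + 4) * (1 / y) := Chebyshev.psi_le_const_mul_self (by positivity)
    _ = (Real.log 4 + 4) / y := mul_one_div _ _

lemma psiSmooth_eq_zero {y : ℝ} (hy : 1 ≤ y) : psiSmooth y = 0 := by
  rw [psiSmooth_eq_sum (by linarith) (N := 1)
    (Nat.floor_le_one_of_le_one ((div_le_one (by linarith)).2 hy))]
  simp

lemma continuousOn_psiSmooth : ContinuousOn psiSmooth (Set.Ioi 0) := by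
  refine continuousOn_of_forall_continuousAt fun y (hy : 0 < y) => ?_
  have h : (fun z => ∑ n ∈ Finset.Ioc 0 ⌊1 / (y / 2)⌋₊, Λ n * max 0 (1 - n * z)) =ᶠ[𝓝 y]
      psiSmooth := by
    filter_upwards [lt_mem_nhds (half_lt_self hy)] with z hz
    exact (psiSmooth_eq_sum (by linarith) (Nat.floor_le_floor (by gcongr))).symm
  exact ContinuousAt.congr (by fun_prop) h

lemma isBigO_psiSmooth_nhdsGT_zero :
    (fun y => (psiSmooth y : ℂ)) =O[𝓝[>] 0] (· ^ (-1 : ℝ)) := by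
  refine .of_bound (Real.log 4 + 4) ?_
  filter_upwards [self_mem_nhdsWithin] with y (hy : 0 < y)
  rw [Complex.norm_of_nonneg (psiSmooth_nonneg y), rpow_neg_one,
    Real.norm_of_nonneg (by positivity), ← div_eq_mul_inv]
  exact psiSmooth_le hy

lemma hasMellin_psiSmooth {s : ℂ} (hs : 1 < s.re) :
    HasMellin (fun y => (psiSmooth y : ℂ)) s
      (-deriv riemannZeta s / riemannZeta s / (s * (s + 1))) := by
  have hmax := hasMellin_max_one_sub (s := s) (by linarith)
  constructor
  · refine mellinConvergent_of_isBigO_rpow (a := s.re + 1)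
      (ContinuousOn.locallyIntegrableOn (Complex.continuous_ofReal.comp_continuousOn
        continuousOn_psiSmooth) measurableSet_Ioi) (EventuallyEq.trans_isBigO ?_ (isBigO_zero _ _))
      (by linarith) isBigO_psiSmooth_nhdsGT_zero hs
    filter_upwards [eventually_ge_atTop 1] with y hy
    simp [psiSmooth_eq_zero hy]
  · rw [← LSeries_vonMangoldt_eq_deriv_riemannZeta_div hs, ← mul_one_div, ← hmax.2,
      ← mellin_tsum_mul_comp_mul_left (LSeriesSummable_vonMangoldt hs) (by simp) hmax.1]
    simp only [psiSmooth, Complex.ofReal_tsum, Complex.ofReal_mul]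

/-- The difference between `psiSmooth y` and `∫ t in 1..1/y, (1 - t * y)`, its main term. -/
noncomputable def psiSmoothError (y : ℝ) : ℝ := psiSmooth y - max 0 (1 - y) ^ 2 / (2 * y)

lemma psiSmoothError_eq_zero {y : ℝ} (hy : 1 ≤ y) : psiSmoothError y = 0 := by
  rw [psiSmoothError, psiSmooth_eq_zero hy, max_eq_left (by linarith)]
  simp

lemma continuousOn_psiSmoothError : ContinuousOn psiSmoothError (Set.Ioi 0) :=
  continuousOn_psiSmooth.sub (ContinuousOn.div (by fun_prop) (by fun_prop)
    fun y (hy : 0 < y) => by positivity)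

lemma isBigO_psiSmoothError_nhdsGT_zero :
    (fun y => (psiSmoothError y : ℂ)) =O[𝓝[>] 0] (· ^ (-1 : ℝ)) := by
  simp only [psiSmoothError, Complex.ofReal_sub]
  refine isBigO_psiSmooth_nhdsGT_zero.sub (.of_bound (1 / 2) ?_)
  filter_upwards [Ioc_mem_nhdsGT one_pos] with y hy
  have hy0 : 0 < y := hy.1
  have hmax : max 0 (1 - y) ^ 2 ≤ 1 :=
    pow_le_one₀ (le_max_left _ _) (max_le zero_le_one (by linarith))
  rw [Complex.norm_of_nonneg (by positivity), rpow_neg_one, Real.norm_of_nonneg (by positivity)]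
  calc _ ≤ 1 / (2 * y) := by gcongr
    _ = _ := by field_simp

lemma mellin_psiSmoothError {s : ℂ} (hs : 1 < s.re) :
    mellin (fun y => (psiSmoothError y : ℂ)) s = psiErrorTransform s := by
  have hmain := hasMellin_max_one_sub_sq_div hs
  have h := (hasMellin_sub (hasMellin_psiSmooth hs).1 hmain.1).2
  rw [(hasMellin_psiSmooth hs).2, hmain.2] at h
  have hs1 : s ≠ 1 := by rintro rfl; simp at hs
  have hs2 : s - 1 ≠ 0 := sub_ne_zero.2 hs1
  have hζ := riemannZeta_ne_zero_of_one_le_re hs.le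
  have hs0 : s ≠ 0 := Complex.ne_zero_of_re_pos (by linarith)
  have hs3 : s + 1 ≠ 0 := Complex.ne_zero_of_re_pos (by simp; linarith)
  simp only [psiSmoothError, Complex.ofReal_sub, h]
  rw [psiErrorTransform, logDeriv_riemannZeta₁ hs1 hζ, logDeriv_apply]
  field_simp
  ring

lemma hasMellin_log_pow_psiSmoothError (n : ℕ) {s : ℂ} (hs : 1 < s.re) :
    HasMellin (fun y : ℝ => Real.log y ^ n • (psiSmoothError y : ℂ)) s
      (iteratedDeriv n psiErrorTransform s) := by
  refine hasMellin_log_pow_smul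
    (Complex.continuous_ofReal.comp_continuousOn continuousOn_psiSmoothError) ?_
    isBigO_psiSmoothError_nhdsGT_zero (fun _ => mellin_psiSmoothError) n hs
  filter_upwards [eventually_ge_atTop 1] with y hy
  simp [psiSmoothError_eq_zero hy]

lemma integrable_one_add_abs_rpow {r : ℝ} (hr : r < -1) :
    Integrable fun t : ℝ => (1 + |t|) ^ r := by
  simpa using integrable_one_add_norm (E := ℝ) (μ := volume) (r := -r) (by simp; linarith)

lemma exists_abs_log_pow_mul_psiSmoothError_le (n : ℕ) : ∃ C : ℝ, ∀ y : ℝ, 0 < y →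
    |Real.log y ^ n * psiSmoothError y| ≤ C / y := by
  obtain ⟨C, hC⟩ := exists_norm_iteratedDeriv_psiErrorTransform_le n
  refine ⟨∫ t : ℝ, C * (1 + |t|) ^ (-(3 / 2) : ℝ), fun y hy => ?_⟩
  have hbound : ∀ σ ∈ Set.Ioc (1 : ℝ) (3 / 2), |Real.log y ^ n * psiSmoothError y| ≤
      y ^ (-σ) * ∫ t : ℝ, C * (1 + |t|) ^ (-(3 / 2) : ℝ) := by
    intro σ hσ
    have hmellin (t : ℝ) := hasMellin_log_pow_psiSmoothError n (s := σ + t * Complex.I)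
      (by simpa using hσ.1)
    have hcont : ContinuousAt (fun y : ℝ => Real.log y ^ n • (psiSmoothError y : ℂ)) y :=
      ((continuousAt_log hy.ne').pow n).smul (Complex.continuous_ofReal.continuousAt.comp
        (continuousOn_psiSmoothError.continuousAt (Ioi_mem_nhds hy)))
    have hmeas : Continuous fun t : ℝ =>
        iteratedDeriv n psiErrorTransform (σ + t * Complex.I) := by
      refine continuous_iff_continuousAt.2 fun t => ContinuousAt.comp (g := iteratedDeriv n _) ?_
        (by fun_prop)
      rw [iteratedDeriv_eq_iterate]
      exact ((analyticAt_psiErrorTransform_of_one_le_re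
        (by simpa using hσ.1.le)).iterated_deriv n).continuousAt
    have h := norm_le_of_norm_mellin_le (σ := σ) hy (by simpa using (hmellin 0).1) hcont
      (by simpa only [(hmellin _).2] using hmeas.aestronglyMeasurable)
      ((integrable_one_add_abs_rpow (r := -(3 / 2)) (by norm_num)).const_mul C) fun t => by
        rw [(hmellin t).2]
        simpa using hC (σ + t * Complex.I) (by simpa using hσ.1.le) (by simpa using hσ.2)
    simpa [norm_smul, abs_mul] using h
  have hlim : Tendsto (fun σ : ℝ => y ^ (-σ) * ∫ t : ℝ, C * (1 + |t|) ^ (-(3 / 2) : ℝ)) (𝓝[>] 1)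
      (𝓝 (y ^ (-1 : ℝ) * ∫ t : ℝ, C * (1 + |t|) ^ (-(3 / 2) : ℝ))) :=
    (((continuous_const.rpow continuous_neg fun _ => Or.inl hy.ne').mul
      continuous_const).tendsto 1).mono_left nhdsWithin_le_nhds
  rw [div_eq_inv_mul, ← rpow_neg_one]
  exact ge_of_tendsto hlim (eventually_of_mem (Ioc_mem_nhdsGT (by norm_num)) hbound)

lemma mul_psiSmooth_inv_eq_sum {x : ℝ} (hx : 0 < x) {N : ℕ} (hN : ⌊x⌋₊ ≤ N) :
    x * psiSmooth x⁻¹ = ∑ n ∈ Finset.Ioc 0 N, Λ n * max 0 (x - n) := by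
  rw [psiSmooth_eq_sum (N := N) (inv_pos.2 hx) (by rwa [one_div, inv_inv]), Finset.mul_sum]
  refine Finset.sum_congr rfl fun n _ => ?_
  rw [mul_left_comm, mul_max_of_nonneg _ _ hx.le, mul_zero]
  field_simp

lemma psi_mul_sub_le {x y : ℝ} (hx : 0 < x) (hy : 0 < y) :
    Chebyshev.psi x * (y - x) ≤ y * psiSmooth y⁻¹ - x * psiSmooth x⁻¹ := by
  rw [mul_psiSmooth_inv_eq_sum hx (le_max_left _ ⌊y⌋₊),
    mul_psiSmooth_inv_eq_sum hy (le_max_right ⌊x⌋₊ _), ← Finset.sum_sub_distrib, Chebyshev.psi,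
    Finset.sum_mul]
  calc ∑ n ∈ Finset.Ioc 0 ⌊x⌋₊, Λ n * (y - x)
      ≤ ∑ n ∈ Finset.Ioc 0 ⌊x⌋₊, (Λ n * max 0 (y - n) - Λ n * max 0 (x - n)) := by
        refine Finset.sum_le_sum fun n hn => ?_
        have hn' : (n : ℝ) ≤ x := (Nat.le_floor_iff hx.le).1 (Finset.mem_Ioc.1 hn).2
        rw [← mul_sub, max_eq_right (sub_nonneg.2 hn')]
        exact mul_le_mul_of_nonneg_left (by linarith [le_max_right 0 (y - n)]) vonMangoldt_nonneg
    _ ≤ _ := by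
        refine Finset.sum_le_sum_of_subset_of_nonneg
          (Finset.Ioc_subset_Ioc_right (le_max_left _ _)) fun n hn hn' => ?_
        have hxn : x < n := (Nat.floor_lt hx.le).1
          (not_le.1 fun h => hn' (Finset.mem_Ioc.2 ⟨(Finset.mem_Ioc.1 hn).1, h⟩))
        rw [max_eq_left (by linarith : x - n ≤ 0), mul_zero, sub_zero]
        exact mul_nonneg vonMangoldt_nonneg (le_max_left _ _)

lemma exists_abs_mul_psiSmooth_inv_sub_le (n : ℕ) : ∃ C : ℝ, 0 ≤ C ∧ ∀ x : ℝ, 1 < x →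
    |x * psiSmooth x⁻¹ - (x - 1) ^ 2 / 2| ≤ C * (x ^ 2 / Real.log x ^ n) := by
  obtain ⟨C, hC⟩ := exists_abs_log_pow_mul_psiSmoothError_le n
  have hC0 : 0 ≤ C := by simpa using (abs_nonneg _).trans (hC 1 one_pos)
  refine ⟨C, hC0, fun x hx => ?_⟩
  have hx0 : 0 < x := by linarith
  have hlog : 0 < Real.log x := log_pos hx
  have h := hC x⁻¹ (by positivity)
  rw [log_inv, abs_mul, abs_pow, abs_neg, abs_of_pos hlog, div_inv_eq_mul] at h
  have herror : x * psiSmooth x⁻¹ - (x - 1) ^ 2 / 2 = x * psiSmoothError x⁻¹ := by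
    rw [psiSmoothError, max_eq_right (sub_nonneg.2 (inv_le_one_of_one_le₀ hx.le))]
    field_simp
  rw [herror, abs_mul, abs_of_pos hx0, mul_div_assoc', le_div_iff₀ (by positivity)]
  nlinarith

lemma abs_sub_le_of_forall_mul_sub_le {G : ℝ → ℝ} {v x h K : ℝ} (hh : 0 < h)
    (hv : ∀ y ∈ Set.Icc (x - h) (x + h), v * (y - x) ≤ G y - G x)
    (hG : ∀ y ∈ Set.Icc (x - h) (x + h), |G y - (y - 1) ^ 2 / 2| ≤ K) :
    |v - (x - 1)| ≤ 2 * K / h + h / 2 := by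
  have hl : x - h ∈ Set.Icc (x - h) (x + h) := ⟨le_rfl, by linarith⟩
  have hm : x ∈ Set.Icc (x - h) (x + h) := ⟨by linarith, by linarith⟩
  have hr : x + h ∈ Set.Icc (x - h) (x + h) := ⟨by linarith, le_rfl⟩
  have hGl := abs_le.1 (hG _ hl)
  have hGm := abs_le.1 (hG _ hm)
  have hGr := abs_le.1 (hG _ hr)
  have hvl := hv _ hl
  have hvr := hv _ hr
  rw [show 2 * K / h + h / 2 = (2 * K + h ^ 2 / 2) / h by field_simp, abs_sub_le_iff,
    le_div_iff₀ hh, le_div_iff₀ hh]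
  constructor <;> linarith

lemma sq_div_log_pow_le {x y : ℝ} (hx : 4 ≤ x) (hy : y ∈ Set.Icc (x / 2) (2 * x)) (n : ℕ) :
    y ^ 2 / Real.log y ^ n ≤ 4 * 2 ^ n * (x ^ 2 / Real.log x ^ n) := by
  have hx0 : 0 < x := by linarith
  have hlogx : 0 < Real.log x := log_pos (by linarith)
  have hlog : Real.log x / 2 ≤ Real.log y := by
    rw [← log_sqrt hx0.le]
    refine log_le_log (sqrt_pos.2 hx0) (hy.1.trans' ?_)
    rw [sqrt_le_left (by positivity)]
    nlinarith
  have hy0 : 0 ≤ y := by linarith [hy.1]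
  calc y ^ 2 / Real.log y ^ n ≤ (2 * x) ^ 2 / (Real.log x / 2) ^ n := by
        gcongr
        exact hy.2
    _ = _ := by rw [div_pow]; field_simp; ring

lemma exists_abs_psi_sub_sub_one_le (n : ℕ) : ∃ C : ℝ, ∀ x : ℝ, 4 ≤ x →
    |Chebyshev.psi x - (x - 1)| ≤ C * (x / Real.log x ^ n) := by
  obtain ⟨C, hC0, hC⟩ := exists_abs_mul_psiSmooth_inv_sub_le (2 * n)
  refine ⟨16 * 4 ^ n * C + 1 / 4, fun x hx => ?_⟩
  have hlog : 1 ≤ Real.log x := by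
    rw [le_log_iff_exp_le (by linarith)]
    linarith [exp_one_lt_d9]
  set h := x / (2 * Real.log x ^ n) with hh
  have hhx : h ≤ x / 2 := by
    rw [hh, ← div_div]
    exact div_le_self (by positivity) (one_le_pow₀ hlog)
  have hh0 : 0 < h := by positivity
  refine (abs_sub_le_of_forall_mul_sub_le (G := fun y => y * psiSmooth y⁻¹)
    (K := C * (4 * 2 ^ (2 * n) * (x ^ 2 / Real.log x ^ (2 * n)))) hh0
    (fun y hy => psi_mul_sub_le (by linarith) (by linarith [hy.1])) fun y hy => ?_).trans_eq ?_
  · refine (hC y (by linarith [hy.1])).trans ?_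
    gcongr
    exact sq_div_log_pow_le hx ⟨by linarith [hy.1], by linarith [hy.2]⟩ _
  · rw [hh, pow_mul, pow_mul']
    field_simp
    ring

lemma isBigO_psi_sub_id (n : ℕ) :
    (fun x => Chebyshev.psi x - x) =O[atTop] fun x => x / Real.log x ^ n := by
  obtain ⟨C, hC⟩ := exists_abs_psi_sub_sub_one_le n
  have hpsi : (fun x => Chebyshev.psi x - (x - 1)) =O[atTop] fun x => x / Real.log x ^ n := by
    refine .of_bound C ?_
    filter_upwards [eventually_ge_atTop 4] with x hx
    have hlog : 0 < Real.log x := log_pos (by linarith)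
    rw [Real.norm_eq_abs, Real.norm_of_nonneg (by positivity)]
    exact hC x hx
  have hone : (fun _ : ℝ => (1 : ℝ)) =O[atTop] fun x => x / Real.log x ^ n := by
    refine .of_bound' ?_
    filter_upwards [(isLittleO_pow_log_id_atTop (n := n)).bound one_pos,
      eventually_gt_atTop 1] with x hx hx1
    have hlog : 0 < Real.log x := log_pos hx1
    rw [norm_one, norm_div, one_le_div (norm_pos_iff.2 (by positivity))]
    simpa using hx
  exact (hpsi.sub hone).congr_left fun x => by ring

end PrimeNumberTheorem

section TailSum

open MeasureTheory Asymptotics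

lemma integral_eq_mul_sub_mul_sub_integral {w w' : ℝ → ℝ} {x y : ℝ} (hxy : x ≤ y)
    (hw : ∀ t ∈ Set.Icc x y, HasDerivAt w (w' t) t) (hw' : ContinuousOn w' (Set.Icc x y)) :
    ∫ t in x..y, w t = w y * y - w x * x - ∫ t in x..y, w' t * t := by
  rw [← Set.uIcc_of_le hxy] at hw hw'
  simpa using intervalIntegral.integral_mul_deriv_eq_deriv_mul hw (fun t _ => hasDerivAt_id t)
    hw'.intervalIntegrable intervalIntegrable_const

lemma sum_Ioc_mul_sub_mul_integral_eq {w w' : ℝ → ℝ} (c : ℕ → ℝ) (A : ℝ) {x : ℝ} {N : ℕ}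
    (hx : 0 ≤ x) (hxN : x ≤ N) (hw : ∀ t ∈ Set.Icc x N, HasDerivAt w (w' t) t)
    (hw' : ContinuousOn w' (Set.Icc x N)) :
    ∑ n ∈ Finset.Ioc ⌊x⌋₊ N, w n * c n - A * ∫ t in x..N, w t =
      w N * (∑ n ∈ Finset.Icc 0 ⌊(N : ℝ)⌋₊, c n - A * N) -
        w x * (∑ n ∈ Finset.Icc 0 ⌊x⌋₊, c n - A * x) -
        ∫ t in x..N, w' t * (∑ n ∈ Finset.Icc 0 ⌊t⌋₊, c n - A * t) := by
  have habel := sum_mul_eq_sub_sub_integral_mul c hx hxN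
    (fun t ht => (hw t ht).differentiableAt)
    (hw'.integrableOn_Icc.congr_fun (fun t ht => (hw t ht).deriv.symm) measurableSet_Icc)
  have hderiv : ∫ t in Set.Ioc x N, deriv w t * ∑ k ∈ Finset.Icc 0 ⌊t⌋₊, c k =
      ∫ t in x..N, w' t * ∑ k ∈ Finset.Icc 0 ⌊t⌋₊, c k := by
    rw [intervalIntegral.integral_of_le hxN]
    exact setIntegral_congr_fun measurableSet_Ioc fun t ht => by
      rw [(hw t (Set.Ioc_subset_Icc_self ht)).deriv]
  have hsplit : ∫ t in x..N, w' t * (∑ n ∈ Finset.Icc 0 ⌊t⌋₊, c n - A * t) =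
      (∫ t in x..N, w' t * ∑ n ∈ Finset.Icc 0 ⌊t⌋₊, c n) - A * ∫ t in x..N, w' t * t := by
    rw [← intervalIntegral.integral_const_mul, ← intervalIntegral.integral_sub]
    · congr with t
      ring
    · rw [intervalIntegrable_iff_integrableOn_Icc_of_le hxN]
      exact integrableOn_mul_sum_Icc c hx hw'.integrableOn_Icc
    · exact ((hw'.mul continuousOn_id).intervalIntegrable_of_Icc hxN).const_mul A
  rw [Nat.floor_natCast] at habel ⊢
  rw [habel, hderiv, hsplit, integral_eq_mul_sub_mul_sub_integral hxN hw hw']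
  ring

lemma abs_sum_Ioc_mul_sub_mul_integral_le {w w' : ℝ → ℝ} {c : ℕ → ℝ} {A ε x : ℝ} {N : ℕ}
    (hx : 0 ≤ x) (hxN : x ≤ N) (hw : ∀ t ∈ Set.Icc x N, HasDerivAt w (w' t) t)
    (hw' : ContinuousOn w' (Set.Icc x N)) (hw0 : ∀ t ∈ Set.Icc x N, 0 ≤ w t)
    (hw'0 : ∀ t ∈ Set.Icc x N, w' t ≤ 0)
    (hc : ∀ t ∈ Set.Icc x N, |∑ n ∈ Finset.Icc 0 ⌊t⌋₊, c n - A * t| ≤ ε * t) :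
    |∑ n ∈ Finset.Ioc ⌊x⌋₊ N, w n * c n - A * ∫ t in x..N, w t| ≤
      ε * (2 * (w x * x) + ∫ t in x..N, w t) := by
  have hxmem : x ∈ Set.Icc x N := Set.left_mem_Icc.2 hxN
  have hNmem : (N : ℝ) ∈ Set.Icc x N := Set.right_mem_Icc.2 hxN
  have hboundary : ∀ t ∈ Set.Icc x N,
      |w t * (∑ n ∈ Finset.Icc 0 ⌊t⌋₊, c n - A * t)| ≤ ε * (w t * t) := fun t ht => by
    rw [abs_mul, abs_of_nonneg (hw0 t ht), mul_left_comm]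
    exact mul_le_mul_of_nonneg_left (hc t ht) (hw0 t ht)
  have hintegral : |∫ t in x..N, w' t * (∑ n ∈ Finset.Icc 0 ⌊t⌋₊, c n - A * t)| ≤
      -(ε * ∫ t in x..N, w' t * t) := by
    rw [← neg_mul, ← intervalIntegral.integral_const_mul, ← Real.norm_eq_abs]
    refine intervalIntegral.norm_integral_le_of_norm_le hxN
      (Eventually.of_forall fun t ht => ?_)
      (((hw'.mul continuousOn_id).intervalIntegrable_of_Icc hxN).const_mul _)
    have ht' := Set.Ioc_subset_Icc_self ht
    rw [Real.norm_eq_abs, abs_mul, abs_of_nonpos (hw'0 t ht')]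
    linarith [mul_le_mul_of_nonneg_left (hc t ht') (neg_nonneg.2 (hw'0 t ht'))]
  rw [sum_Ioc_mul_sub_mul_integral_eq c A hx hxN hw hw']
  calc _ ≤ ε * (w N * N) + ε * (w x * x) + -(ε * ∫ t in x..N, w' t * t) :=
        (abs_sub _ _).trans (add_le_add ((abs_sub _ _).trans
          (add_le_add (hboundary N hNmem) (hboundary x hxmem))) hintegral)
    _ = ε * (2 * (w x * x) + ∫ t in x..N, w t) := by
        rw [integral_eq_mul_sub_mul_sub_integral hxN hw hw']
        ring

lemma hasDerivAt_rpow_mul_log_pow (b : ℝ) (m : ℕ) {t : ℝ} (ht : 1 < t) :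
    HasDerivAt (fun t : ℝ => t ^ b * Real.log t ^ m)
      (t ^ (b - 1) * Real.log t ^ m * (b + m / Real.log t)) t := by
  have ht0 : 0 < t := by linarith
  have hlog : Real.log t ≠ 0 := (log_pos ht).ne'
  refine ((hasDerivAt_rpow_const (p := b) (.inl ht0.ne')).mul
    ((hasDerivAt_log ht0.ne').pow m)).congr_deriv ?_
  rw [rpow_sub_one ht0.ne']
  rcases m with _ | m
  · simp
    ring
  · simp only [Nat.add_sub_cancel, Pi.pow_apply]
    field_simp
    ring

lemma continuousOn_rpow_mul_log_pow_mul (b c : ℝ) (m : ℕ) :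
    ContinuousOn (fun t : ℝ => t ^ b * Real.log t ^ m * (c + m / Real.log t)) (Set.Ioi 1) := by
  intro t (ht : 1 < t)
  have ht0 : t ≠ 0 := by linarith
  have hlog : Real.log t ≠ 0 := (log_pos ht).ne'
  refine ContinuousAt.continuousWithinAt ?_
  fun_prop (disch := grind)

lemma integral_rpow_mul_log_pow_eq {a : ℝ} (ha : 1 < a) (m : ℕ) {x y : ℝ} (hx : 1 < x)
    (hxy : x ≤ y) :
    ∫ t in x..y, t ^ (-a) * Real.log t ^ m =
      x ^ (1 - a) * Real.log x ^ m / (a - 1) - y ^ (1 - a) * Real.log y ^ m / (a - 1) +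
        ∫ t in x..y, t ^ (-a) * Real.log t ^ m * (m / (a - 1) / Real.log t) := by
  have hsub : Set.uIcc x y ⊆ Set.Ioi 1 := by
    rw [Set.uIcc_of_le hxy]
    exact fun t ht => hx.trans_le ht.1
  have hcont (c : ℝ) := (continuousOn_rpow_mul_log_pow_mul (-a) c m).mono hsub
  have hint := intervalIntegral.integral_eq_sub_of_hasDerivAt
    (fun t ht => (hasDerivAt_rpow_mul_log_pow (1 - a) m (hsub ht)).div_const (a - 1))
    (by simpa using ((hcont (1 - a)).div_const (a - 1)).intervalIntegrable)
  rw [← neg_sub, ← hint, neg_add_eq_sub, ← intervalIntegral.integral_sub]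
  · congr with t
    rw [show 1 - a - 1 = -a by ring]
    field_simp [(sub_pos.2 ha).ne']
    ring
  · exact (((hcont 0).div_const (a - 1)).congr fun t _ => by ring).intervalIntegrable
  · simpa using ((hcont (1 - a)).div_const (a - 1)).intervalIntegrable

lemma integral_mul_div_log_mem_Icc {w : ℝ → ℝ} {κ x y : ℝ} (hκ : 0 ≤ κ) (hx : 1 < x)
    (hxy : x ≤ y) (hw : ContinuousOn w (Set.Icc x y)) (hw0 : ∀ t ∈ Set.Icc x y, 0 ≤ w t) :
    ∫ t in x..y, w t * (κ / Real.log t) ∈ Set.Icc 0 ((∫ t in x..y, w t) * (κ / Real.log x)) := by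
  have hlog : ∀ t ∈ Set.Icc x y, 0 < Real.log t := fun t ht => log_pos (hx.trans_le ht.1)
  have hlogc : ContinuousOn Real.log (Set.Icc x y) :=
    continuousOn_log.mono fun t ht => (zero_lt_one.trans (hx.trans_le ht.1)).ne'
  rw [← intervalIntegral.integral_mul_const]
  refine ⟨intervalIntegral.integral_nonneg hxy fun t ht =>
      mul_nonneg (hw0 t ht) (div_nonneg hκ (hlog t ht).le),
    intervalIntegral.integral_mono_on hxy ?_ ?_ fun t ht => ?_⟩
  · exact (hw.mul (continuousOn_const.div hlogc fun t ht => (hlog t ht).ne')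
      ).intervalIntegrable_of_Icc hxy
  · exact (hw.mul continuousOn_const).intervalIntegrable_of_Icc hxy
  · have hlogx := log_pos hx
    have := hw0 t ht
    gcongr
    exact ht.1

lemma rpow_mul_log_pow_nonneg (b : ℝ) (m : ℕ) {t : ℝ} (ht : 1 ≤ t) :
    0 ≤ t ^ b * Real.log t ^ m :=
  mul_nonneg (rpow_nonneg (by linarith) b) (pow_nonneg (log_nonneg ht) m)

lemma integral_rpow_mul_log_pow_sub_mem_Icc {a : ℝ} (ha : 1 < a) (m : ℕ) {x y : ℝ} (hx : 1 < x)
    (hxy : x ≤ y) :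
    (∫ t in x..y, t ^ (-a) * Real.log t ^ m) - (x ^ (1 - a) * Real.log x ^ m / (a - 1) -
        y ^ (1 - a) * Real.log y ^ m / (a - 1)) ∈
      Set.Icc 0 ((∫ t in x..y, t ^ (-a) * Real.log t ^ m) * (m / (a - 1) / Real.log x)) := by
  rw [sub_eq_iff_eq_add'.2 (integral_rpow_mul_log_pow_eq ha m hx hxy)]
  exact integral_mul_div_log_mem_Icc (div_nonneg m.cast_nonneg (sub_pos.2 ha).le) hx hxy
    (fun t ht => (hasDerivAt_rpow_mul_log_pow (-a) m
      (hx.trans_le ht.1)).continuousAt.continuousWithinAt)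
    fun t ht => rpow_mul_log_pow_nonneg _ _ (hx.le.trans ht.1)

lemma integral_rpow_mul_log_pow_le {a : ℝ} (ha : 1 < a) {m : ℕ} {x y : ℝ} (hx : 1 < x)
    (hm : 2 * (m / (a - 1)) ≤ Real.log x) (hxy : x ≤ y) :
    ∫ t in x..y, t ^ (-a) * Real.log t ^ m ≤ 2 * (x ^ (1 - a) * Real.log x ^ m / (a - 1)) := by
  have hI : 0 ≤ ∫ t in x..y, t ^ (-a) * Real.log t ^ m :=
    intervalIntegral.integral_nonneg hxy fun t ht =>
      rpow_mul_log_pow_nonneg _ _ (hx.le.trans ht.1)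
  have hy : 0 ≤ y ^ (1 - a) * Real.log y ^ m / (a - 1) :=
    div_nonneg (rpow_mul_log_pow_nonneg _ _ (hx.le.trans hxy)) (sub_pos.2 ha).le
  have hhalf : m / (a - 1) / Real.log x ≤ 1 / 2 := by
    rw [div_le_iff₀ (log_pos hx)]
    linarith
  linarith [(integral_rpow_mul_log_pow_sub_mem_Icc ha m hx hxy).2,
    mul_le_mul_of_nonneg_left hhalf hI]

lemma abs_integral_rpow_mul_log_pow_sub_le {a : ℝ} (ha : 1 < a) {m : ℕ} {x y : ℝ} (hx : 1 < x)
    (hm : 2 * (m / (a - 1)) ≤ Real.log x) (hxy : x ≤ y) :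
    |(∫ t in x..y, t ^ (-a) * Real.log t ^ m) - (x ^ (1 - a) * Real.log x ^ m / (a - 1) -
      y ^ (1 - a) * Real.log y ^ m / (a - 1))| ≤
      2 * (m / (a - 1)) * (x ^ (1 - a) * Real.log x ^ m / (a - 1) / Real.log x) := by
  obtain ⟨hnonneg, hle⟩ := integral_rpow_mul_log_pow_sub_mem_Icc ha m hx hxy
  have hfactor : 0 ≤ m / (a - 1) / Real.log x :=
    div_nonneg (div_nonneg m.cast_nonneg (sub_pos.2 ha).le) (log_pos hx).le
  rw [abs_of_nonneg hnonneg]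
  refine (hle.trans (mul_le_mul_of_nonneg_right (integral_rpow_mul_log_pow_le ha hx hm hxy)
    hfactor)).trans_eq ?_
  ring

lemma abs_sum_Ioc_rpow_mul_log_pow_mul_sub_le {c : ℕ → ℝ} {A ε : ℝ} (hε : 0 ≤ ε) {a : ℝ}
    (ha : 1 < a) {m : ℕ} {x : ℝ} (hx : 1 < x) (hm : 2 * (m / (a - 1)) ≤ Real.log x) {N : ℕ}
    (hxN : x ≤ N) (hc : ∀ t ∈ Set.Icc x N, |∑ n ∈ Finset.Icc 0 ⌊t⌋₊, c n - A * t| ≤ ε * t) :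
    |∑ n ∈ Finset.Ioc ⌊x⌋₊ N, (n : ℝ) ^ (-a) * Real.log n ^ m * c n -
        A * (x ^ (1 - a) * Real.log x ^ m / (a - 1) -
          (N : ℝ) ^ (1 - a) * Real.log N ^ m / (a - 1))| ≤
      2 * a * ε * (x ^ (1 - a) * Real.log x ^ m / (a - 1)) +
        |A| * (2 * (m / (a - 1)) * (x ^ (1 - a) * Real.log x ^ m / (a - 1) / Real.log x)) := by
  have ha1 : 0 < a - 1 := sub_pos.2 ha
  have hlogx : 0 < Real.log x := log_pos hx
  have hone : ∀ t ∈ Set.Icc x N, 1 < t := fun t ht => hx.trans_le ht.1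
  have hderiv_nonpos : ∀ t ∈ Set.Icc x N,
      t ^ (-a - 1) * Real.log t ^ m * (-a + m / Real.log t) ≤ 0 := fun t ht => by
    have hlogt : Real.log x ≤ Real.log t := log_le_log (by linarith) ht.1
    refine mul_nonpos_of_nonneg_of_nonpos (rpow_mul_log_pow_nonneg _ _ (hone t ht).le) ?_
    rw [neg_add_nonpos_iff, div_le_iff₀ (hlogx.trans_le hlogt)]
    rw [← mul_div_assoc, div_le_iff₀ ha1] at hm
    nlinarith
  have hsum := abs_sum_Ioc_mul_sub_mul_integral_le (by linarith) hxN
    (fun t ht => hasDerivAt_rpow_mul_log_pow (-a) m (hone t ht))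
    ((continuousOn_rpow_mul_log_pow_mul _ _ m).mono hone)
    (fun t ht => rpow_mul_log_pow_nonneg _ _ (hone t ht).le) hderiv_nonpos hc
  have hint := abs_integral_rpow_mul_log_pow_sub_le ha hx hm hxN
  have hIV := integral_rpow_mul_log_pow_le ha hx hm hxN
  set I := ∫ t in x..N, t ^ (-a) * Real.log t ^ m
  set V := x ^ (1 - a) * Real.log x ^ m / (a - 1)
  set W := (N : ℝ) ^ (1 - a) * Real.log N ^ m / (a - 1)
  have hwV : x ^ (-a) * Real.log x ^ m * x = (a - 1) * V := by
    rw [mul_div_cancel₀ _ ha1.ne', sub_eq_neg_add, rpow_add_one (by linarith)]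
    ring
  calc _ = |(∑ n ∈ Finset.Ioc ⌊x⌋₊ N, (n : ℝ) ^ (-a) * Real.log n ^ m * c n - A * I) +
        A * (I - (V - W))| := by ring_nf
    _ ≤ ε * (2 * ((a - 1) * V) + I) + |A| * |I - (V - W)| := by
      rw [← hwV, ← abs_mul]
      exact (abs_add_le _ _).trans (by gcongr)
    _ ≤ ε * (2 * ((a - 1) * V) + 2 * V) +
        |A| * (2 * (m / (a - 1)) * (V / Real.log x)) := by gcongr
    _ = _ := by ring

lemma exists_abs_sum_Ioc_rpow_mul_log_pow_mul_sub_le {c : ℕ → ℝ} {A : ℝ}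
    (hc : (fun t : ℝ => ∑ n ∈ Finset.Icc 0 ⌊t⌋₊, c n - A * t) =O[atTop] fun t => t / Real.log t)
    {a : ℝ} (ha : 1 < a) (m : ℕ) : ∃ K : ℝ, ∀ᶠ x : ℝ in atTop, ∀ N : ℕ, x ≤ N →
      |∑ n ∈ Finset.Ioc ⌊x⌋₊ N, (n : ℝ) ^ (-a) * Real.log n ^ m * c n -
          A * (x ^ (1 - a) * Real.log x ^ m / (a - 1) -
            (N : ℝ) ^ (1 - a) * Real.log N ^ m / (a - 1))| ≤
        K * (x ^ (1 - a) * Real.log x ^ m / (a - 1) / Real.log x) := by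
  obtain ⟨C, hC0, hC⟩ := hc.exists_nonneg
  obtain ⟨x₀, hx₀⟩ := eventually_atTop.1 hC.bound
  refine ⟨2 * a * C + |A| * (2 * (m / (a - 1))), ?_⟩
  filter_upwards [eventually_ge_atTop x₀, eventually_gt_atTop 1,
    tendsto_log_atTop.eventually_ge_atTop (2 * (m / (a - 1)))] with x hxx₀ hx hm N hxN
  have hlogx : 0 < Real.log x := log_pos hx
  refine (abs_sum_Ioc_rpow_mul_log_pow_mul_sub_le (ε := C / Real.log x) (by positivity) ha hx hm
    hxN fun t ht => ?_).trans_eq (by ring)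
  have ht1 : 1 < t := hx.trans_le ht.1
  have hlogt : 0 < Real.log t := log_pos ht1
  have hlog : Real.log x ≤ Real.log t := log_le_log (by linarith) ht.1
  have ht := hx₀ t (hxx₀.trans ht.1)
  rw [Real.norm_eq_abs, Real.norm_of_nonneg (by positivity)] at ht
  calc _ ≤ C * (t / Real.log t) := ht
    _ ≤ C * (t / Real.log x) := by gcongr
    _ = C / Real.log x * t := by ring

lemma summable_ite_lt {f : ℕ → ℝ} (hf : Summable f) (x : ℝ) :
    Summable fun n : ℕ => if x < (n : ℝ) then f n else 0 := by
  refine (hf.indicator {n : ℕ | x < n}).congr fun n => ?_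
  simp only [Set.indicator_apply, Set.mem_ofPred_eq]

lemma tendsto_sum_Ioc_floor_tsum_ite_lt {f : ℕ → ℝ} (hf : Summable f) {x : ℝ} (hx : 0 ≤ x) :
    Tendsto (fun N : ℕ => ∑ n ∈ Finset.Ioc ⌊x⌋₊ N, f n) atTop
      (nhds (∑' n : ℕ, if x < (n : ℝ) then f n else 0)) := by
  refine ((summable_ite_lt hf x).hasSum.tendsto_sum_nat.comp (tendsto_add_atTop_nat 1)).congr
    fun N => ?_
  rw [Function.comp_apply, ← Finset.sum_filter]
  congr 1
  ext n
  simp [← Nat.floor_lt hx, and_comm]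

lemma tendsto_rpow_neg_mul_log_pow_atTop {b : ℝ} (hb : 0 < b) (m : ℕ) :
    Tendsto (fun t : ℝ => t ^ (-b) * Real.log t ^ m) atTop (nhds 0) := by
  refine (isLittleO_log_rpow_rpow_atTop m hb).tendsto_div_nhds_zero.congr' ?_
  filter_upwards [eventually_gt_atTop 0] with t ht
  rw [rpow_natCast, rpow_neg ht.le]
  ring

lemma isBigO_tsum_tail_sub {c : ℕ → ℝ} {A : ℝ}
    (hc : (fun t : ℝ => ∑ n ∈ Finset.Icc 0 ⌊t⌋₊, c n - A * t) =O[atTop] fun t => t / Real.log t)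
    {a : ℝ} (ha : 1 < a) (m : ℕ)
    (hsum : Summable fun n : ℕ => (n : ℝ) ^ (-a) * Real.log n ^ m * c n) :
    (fun x : ℝ => (∑' n : ℕ, if x < (n : ℝ) then (n : ℝ) ^ (-a) * Real.log n ^ m * c n else 0) -
        A * (x ^ (1 - a) * Real.log x ^ m / (a - 1)))
      =O[atTop] (fun x : ℝ => x ^ (1 - a) * Real.log x ^ m / (a - 1) / Real.log x) := by
  obtain ⟨K, hK⟩ := exists_abs_sum_Ioc_rpow_mul_log_pow_mul_sub_le hc ha m
  refine .of_bound K ?_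
  filter_upwards [hK, eventually_gt_atTop 1] with x hx hx1
  have hzero : Tendsto (fun N : ℕ => (N : ℝ) ^ (1 - a) * Real.log N ^ m / (a - 1)) atTop
      (nhds 0) := by
    simpa [Function.comp_def] using ((tendsto_rpow_neg_mul_log_pow_atTop (sub_pos.2 ha) m).div_const
      (a - 1)).comp tendsto_natCast_atTop_atTop
  have hlim := (tendsto_sum_Ioc_floor_tsum_ite_lt hsum (by linarith)).sub
    ((hzero.const_sub (x ^ (1 - a) * Real.log x ^ m / (a - 1))).const_mul A)
  rw [sub_zero] at hlim
  have hV : 0 ≤ x ^ (1 - a) * Real.log x ^ m / (a - 1) / Real.log x :=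
    div_nonneg (div_nonneg (rpow_mul_log_pow_nonneg _ _ hx1.le) (sub_pos.2 ha).le)
      (log_pos hx1).le
  rw [Real.norm_eq_abs, Real.norm_of_nonneg hV]
  refine le_of_tendsto hlim.abs ?_
  filter_upwards [eventually_ge_atTop ⌈x⌉₊] with N hN
  exact hx N (Nat.ceil_le.1 hN)

lemma summable_rpow_mul_log_pow {a : ℝ} (ha : 1 < a) (m : ℕ) :
    Summable fun n : ℕ => (n : ℝ) ^ (-a) * Real.log n ^ m := by
  have hlog : (fun t : ℝ => Real.log t ^ m) =O[atTop] fun t => t ^ ((a - 1) / 2) := by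
    simpa only [rpow_natCast] using
      (isLittleO_log_rpow_rpow_atTop m (half_pos (sub_pos.2 ha))).isBigO
  have hrpow : (fun t : ℝ => t ^ (-a) * Real.log t ^ m) =O[atTop]
      fun t : ℝ => t ^ (-((a + 1) / 2)) := by
    refine ((isBigO_refl (fun t : ℝ => t ^ (-a)) atTop).mul hlog).congr' .rfl ?_
    filter_upwards [eventually_gt_atTop 0] with t ht
    rw [← rpow_add ht]
    ring_nf
  exact summable_of_isBigO_nat (Real.summable_nat_rpow.2 (by linarith))
    (hrpow.comp_tendsto tendsto_natCast_atTop_atTop)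

end TailSum

section VonMangoldtPow

open Asymptotics

lemma vonMangoldt_pow_div_log_pow_le (m n : ℕ) : Λ n ^ (m + 1) / Real.log n ^ m ≤ Λ n := by
  refine div_le_of_le_mul₀ (pow_nonneg (log_natCast_nonneg n) m) vonMangoldt_nonneg ?_
  rw [pow_succ']
  exact mul_le_mul_of_nonneg_left
    (pow_le_pow_left₀ vonMangoldt_nonneg vonMangoldt_le_log m) vonMangoldt_nonneg

lemma vonMangoldt_pow_div_log_pow_of_prime (m : ℕ) {p : ℕ} (hp : p.Prime) :
    Λ p ^ (m + 1) / Real.log p ^ m = Real.log p := by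
  have hlog : Real.log p ≠ 0 := (log_pos (mod_cast hp.one_lt)).ne'
  rw [vonMangoldt_apply_prime hp, pow_succ', mul_div_cancel_right₀ _ (pow_ne_zero m hlog)]

lemma rpow_mul_log_pow_mul_vonMangoldt_pow_div (b : ℝ) (m n : ℕ) :
    (n : ℝ) ^ b * Real.log n ^ m * (Λ n ^ (m + 1) / Real.log n ^ m) =
      Λ n ^ (m + 1) * (n : ℝ) ^ b := by
  rcases eq_or_ne (Real.log n) 0 with hlog | hlog
  · have hΛ : Λ n = 0 := le_antisymm (hlog ▸ vonMangoldt_le_log) vonMangoldt_nonneg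
    simp [hΛ]
  · field_simp

lemma abs_sum_vonMangoldt_pow_div_log_pow_sub_psi_le (m : ℕ) (t : ℝ) :
    |∑ n ∈ Finset.Icc 0 ⌊t⌋₊, Λ n ^ (m + 1) / Real.log n ^ m - Chebyshev.psi t| ≤
      |Chebyshev.psi t - Chebyshev.theta t| := by
  have hpsi : ∑ n ∈ Finset.Icc 0 ⌊t⌋₊, Λ n ^ (m + 1) / Real.log n ^ m ≤ Chebyshev.psi t := by
    rw [Chebyshev.psi_eq_sum_Icc]
    exact Finset.sum_le_sum fun n _ => vonMangoldt_pow_div_log_pow_le m n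
  have htheta : Chebyshev.theta t ≤ ∑ n ∈ Finset.Icc 0 ⌊t⌋₊, Λ n ^ (m + 1) / Real.log n ^ m := by
    rw [Chebyshev.theta_eq_sum_Icc, ← Finset.sum_congr rfl fun p hp =>
      vonMangoldt_pow_div_log_pow_of_prime m (Finset.mem_filter.1 hp).2]
    exact Finset.sum_le_sum_of_subset_of_nonneg (Finset.filter_subset _ _) fun n _ _ =>
      div_nonneg (pow_nonneg vonMangoldt_nonneg _) (pow_nonneg (log_natCast_nonneg n) _)
  rw [abs_sub_comm, abs_of_nonneg (sub_nonneg.2 hpsi)]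
  exact (sub_le_sub_left htheta _).trans (le_abs_self _)

lemma isBigO_sqrt_div_log : Real.sqrt =O[atTop] fun t => t / Real.log t := by
  refine .of_bound' ?_
  filter_upwards [(isLittleO_log_rpow_atTop (half_pos one_pos)).bound one_pos,
    eventually_gt_atTop 1] with t ht ht1
  have hlog : 0 < Real.log t := log_pos ht1
  rw [one_mul, ← sqrt_eq_rpow, Real.norm_of_nonneg hlog.le,
    Real.norm_of_nonneg (sqrt_nonneg t)] at ht
  rw [Real.norm_of_nonneg (sqrt_nonneg t), Real.norm_of_nonneg (by positivity), le_div_iff₀ hlog]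
  calc √t * Real.log t ≤ √t * √t := by gcongr
    _ = t := mul_self_sqrt (by linarith)

lemma isBigO_sum_vonMangoldt_pow_div_log_pow_sub (m : ℕ) :
    (fun t : ℝ => ∑ n ∈ Finset.Icc 0 ⌊t⌋₊, Λ n ^ (m + 1) / Real.log n ^ m - t) =O[atTop]
      fun t => t / Real.log t := by
  have hpsi : (fun t : ℝ => ∑ n ∈ Finset.Icc 0 ⌊t⌋₊, Λ n ^ (m + 1) / Real.log n ^ m -
      Chebyshev.psi t) =O[atTop] fun t => t / Real.log t :=
    (IsBigO.of_norm_le (abs_sum_vonMangoldt_pow_div_log_pow_sub_psi_le m)).trans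
      (Chebyshev.isBigO_psi_sub_theta_sqrt.norm_left.trans isBigO_sqrt_div_log)
  have hPNT := isBigO_psi_sub_id 1
  simp only [pow_one] at hPNT
  simpa using hpsi.add hPNT

lemma summable_vonMangoldt_pow_mul_rpow (k : ℕ) {a : ℝ} (ha : 1 < a) :
    Summable fun n : ℕ => Λ n ^ k * (n : ℝ) ^ (-a) := by
  refine (summable_rpow_mul_log_pow ha k).of_nonneg_of_le
    (fun n => mul_nonneg (pow_nonneg vonMangoldt_nonneg k) (by positivity)) fun n => ?_
  rw [mul_comm]
  exact mul_le_mul_of_nonneg_left (pow_le_pow_left₀ vonMangoldt_nonneg vonMangoldt_le_log k)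
    (by positivity)

end VonMangoldtPow

theorem vonMangoldt_pow_tail_asymp (k : ℕ) (hk : 1 ≤ k) (a : ℝ) (ha : 1 < a) :
    (fun x : ℝ =>
        (∑' n : ℕ, if x < (n : ℝ) then (Λ n) ^ k * (n : ℝ) ^ (-a) else 0) -
          x ^ (1 - a) * (Real.log x) ^ (k - 1) / (a - 1))
      =O[atTop]
    (fun x : ℝ => (x ^ (1 - a) * (Real.log x) ^ (k - 1) / (a - 1)) / Real.log x) := by
  obtain ⟨m, rfl⟩ := Nat.exists_eq_add_of_le' hk
  have htail := isBigO_tsum_tail_sub (c := fun n => Λ n ^ (m + 1) / Real.log n ^ m) (A := 1)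
    (by simpa only [one_mul] using isBigO_sum_vonMangoldt_pow_div_log_pow_sub m) ha m
    (by simpa only [rpow_mul_log_pow_mul_vonMangoldt_pow_div] using
      summable_vonMangoldt_pow_mul_rpow (m + 1) ha)
  simpa only [rpow_mul_log_pow_mul_vonMangoldt_pow_div, one_mul, Nat.add_sub_cancel] using htail
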